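/- arXiv:2501.10949 — 2 statements merged into one kernel-verified Lean document; each statement's English description precedes it below -/
import Mathlib

section
/- Fix r ∈ {1,2,…,∞} and an integer q ≥ 1, and let 𝓕 be the space of C^r families (f_t)_{t∈[0,1]^q} of functions f_t : ℝ/ℤ → ℝ, endowed with the C^r topology. For each ε ∈ (0,1), the set {((f_t),T) ∈ 𝓕 × 𝓔^r : m_q({t ∈ [0,1]^q : Ω(f_t,T) is a periodic orbit of T}) > ε} is open in 𝓕 × 𝓔^r, where m_q is Lebesgue measure on [0,1]^q. -/
open MeasureTheory Topology Filter Set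
open scoped UniformConvergence

noncomputable section

/-- The circle `ℝ/ℤ`. -/
abbrev Circle1 : Type := AddCircle (1 : ℝ)

/-- The canonical representative in `[0,1)` of a point of `ℝ/ℤ`. -/
noncomputable def rep (z : Circle1) : ℝ := (AddCircle.equivIco 1 0 z : ℝ)

/-- The circle map induced by a lift `F : ℝ → ℝ`. -/
noncomputable def cmap (F : ℝ → ℝ) : Circle1 → Circle1 := fun z => ((F (rep z) : ℝ) : Circle1)

/-- The data determining the `C^r` topology: all derivatives of order `≤ r`, viewed in the
space of functions `ℝ → ℝ` with the uniform-convergence topology. -/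
noncomputable def crSeq (r : ℕ∞) (f : ℝ → ℝ) : ℕ → (ℝ →ᵤ ℝ) :=
  fun k => UniformFun.ofFun (if (k : ℕ∞) ≤ r then iteratedDeriv k f else 0)

/-- The space `𝓒^r` of `C^r` functions `ℝ/ℤ → ℝ`. -/
def CrFun (r : ℕ∞) : Type := {f : Circle1 → ℝ // ContDiff ℝ r fun x : ℝ => f ↑x}

/-- The `C^r` topology on `𝓒^r`. -/
noncomputable instance (r : ℕ∞) : TopologicalSpace (CrFun r) :=
  TopologicalSpace.induced (fun f : CrFun r => crSeq r fun x : ℝ => f.1 ↑x) inferInstance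

/-- `F : ℝ → ℝ` is a lift of a `C^r` expanding circle map: it is `C^r`, sends `x+1` to
`F x + d` for a fixed integer `d`, and `|(Fⁿ)'| ≥ C λⁿ` for some `C > 0`, `λ > 1`. -/
def ExpandingLift (r : ℕ∞) (F : ℝ → ℝ) : Prop :=
  ContDiff ℝ r F ∧ (∃ d : ℤ, ∀ x : ℝ, F (x + 1) = F x + d) ∧
    ∃ C > (0 : ℝ), ∃ l > (1 : ℝ), ∀ n : ℕ, 1 ≤ n → ∀ x : ℝ, C * l ^ n ≤ |deriv (F^[n]) x|

/-- The space `𝓔^r` of (lifts of) `C^r` expanding circle maps, with the `C^r` topology. -/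
def ExpMap (r : ℕ∞) : Type := {F : ℝ → ℝ // ExpandingLift r F}

noncomputable instance (r : ℕ∞) : TopologicalSpace (ExpMap r) :=
  TopologicalSpace.induced (fun F : ExpMap r => crSeq r F.1) inferInstance

/-- `μ` is a `T`-invariant Borel probability measure. -/
def InvProb (T : Circle1 → Circle1) (μ : Measure Circle1) : Prop :=
  IsProbabilityMeasure μ ∧ μ.map T = μ

/-- `β(f,T)`, the maximal ergodic average. -/
noncomputable def beta (f : Circle1 → ℝ) (T : Circle1 → Circle1) : ℝ :=
  sSup ((fun μ : Measure Circle1 => ∫ x, f x ∂μ) '' {μ | InvProb T μ})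

/-- `μ` is a maximizing measure for `(f,T)`. -/
def IsMaximizing (f : Circle1 → ℝ) (T : Circle1 → Circle1) (μ : Measure Circle1) : Prop :=
  InvProb T μ ∧ ∫ x, f x ∂μ = beta f T

/-- `μ` is a periodic measure: an invariant measure supported on a periodic orbit. -/
def IsPeriodicMeasure (T : Circle1 → Circle1) (μ : Measure Circle1) : Prop :=
  InvProb T μ ∧ ∃ x : Circle1, ∃ n : ℕ, 0 < n ∧ T^[n] x = x ∧
    μ (Set.range fun k : ℕ => T^[k] x) = 1

/-- `(f,T)` is uniquely maximized by a periodic measure. -/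
def UniqMaxPeriodic (f : Circle1 → ℝ) (T : Circle1 → Circle1) : Prop :=
  ∃ μ : Measure Circle1, IsMaximizing f T μ ∧ IsPeriodicMeasure T μ ∧
    ∀ ν : Measure Circle1, IsMaximizing f T ν → ν = μ

/-- A (continuous) sub-action for `(f,T)`. -/
def IsSubaction (f : Circle1 → ℝ) (T : Circle1 → Circle1) (g : Circle1 → ℝ) : Prop :=
  Continuous g ∧ ∀ x, g x + f x ≤ g (T x) + beta f T

/-- A calibrated sub-action for `(f,T)`. -/
def IsCalibrated (f : Circle1 → ℝ) (T : Circle1 → Circle1) (g : Circle1 → ℝ) : Prop :=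
  IsSubaction f T g ∧ ∀ x, ∃ y, T y = x ∧ g y + f y = g x + beta f T

/-- `G_{f,T}`: the set of Lipschitz calibrated sub-actions of `(f,T)`. -/
def Gset (f : Circle1 → ℝ) (T : Circle1 → Circle1) : Set (Circle1 → ℝ) :=
  {g | (∃ K : NNReal, LipschitzWith K g) ∧ IsCalibrated f T g}

/-- The set `E_{f,T,g}`. -/
def Eset (f : Circle1 → ℝ) (T : Circle1 → Circle1) (g : Circle1 → ℝ) : Set Circle1 :=
  {x | g x + f x = g (T x) + beta f T}

/-- The set `Λ*_{f,T,g}`. -/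
def LambdaStar (f : Circle1 → ℝ) (T : Circle1 → Circle1) (g : Circle1 → ℝ) : Set Circle1 :=
  {x | ∀ n : ℕ, T^[n] x ∈ Eset f T g}

/-- The set `Λ_{f,T,g}`. -/
def Lambda (f : Circle1 → ℝ) (T : Circle1 → Circle1) (g : Circle1 → ℝ) : Set Circle1 :=
  ⋂ n : ℕ, T^[n] '' LambdaStar f T g

/-- The set `K(f,T)`. -/
def Kset (f : Circle1 → ℝ) (T : Circle1 → Circle1) : Set Circle1 :=
  ⋃ g ∈ Gset f T, Lambda f T g

/-- The `(f,T)`-non-wandering set `Ω(f,T)`. -/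
def OmegaSet (f : Circle1 → ℝ) (T : Circle1 → Circle1) : Set Circle1 :=
  {x | ∀ ε > (0 : ℝ), ∃ n : ℕ, 1 ≤ n ∧ ∃ z : Circle1, T^[n] z = x ∧ dist z x < ε ∧
    |∑ i ∈ Finset.range n, (f (T^[i] z) - beta f T)| < ε}

/-- `A` is a periodic orbit of `T`. -/
def IsPeriodicOrbit (T : Circle1 → Circle1) (A : Set Circle1) : Prop :=
  ∃ x : Circle1, (∃ n : ℕ, 0 < n ∧ T^[n] x = x) ∧ A = Set.range fun k : ℕ => T^[k] x

/-- `A` is a `T`-minimal set: a nonempty compact invariant set with no proper nonempty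
compact invariant subset. -/
def IsMinimalSet (T : Circle1 → Circle1) (A : Set Circle1) : Prop :=
  A.Nonempty ∧ IsCompact A ∧ T '' A ⊆ A ∧
    ∀ B ⊆ A, B.Nonempty → IsCompact B → T '' B ⊆ B → B = A

/-- The space of `C^r` families of functions on the circle with `q` parameters,
i.e. maps `(t,x) ↦ f_t(x)` that are jointly `C^r` (the circle variable via a lift). -/
def FamFun (r : ℕ∞) (q : ℕ) : Type :=
  {G : ((Fin q → ℝ) × ℝ) → ℝ // ContDiff ℝ r G ∧ ∀ t x, G (t, x + 1) = G (t, x)}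

noncomputable def famSeq (r : ℕ∞) (q : ℕ) (G : ((Fin q → ℝ) × ℝ) → ℝ) :
    (k : ℕ) → (((Fin q → ℝ) × ℝ) →ᵤ (((Fin q → ℝ) × ℝ) [×k]→L[ℝ] ℝ)) :=
  fun k => UniformFun.ofFun (if (k : ℕ∞) ≤ r then iteratedFDeriv ℝ k G else 0)

/-- The `C^r` topology on the space of `C^r` families. -/
noncomputable instance (r : ℕ∞) (q : ℕ) : TopologicalSpace (FamFun r q) :=
  TopologicalSpace.induced (fun G : FamFun r q => famSeq r q G.1) inferInstance

/-- The member `f_t : ℝ/ℤ → ℝ` of a family, at the parameter `t`. -/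
noncomputable def famMem {r : ℕ∞} {q : ℕ} (G : FamFun r q) (t : Fin q → ℝ) : Circle1 → ℝ :=
  fun z => G.1 (t, rep z)

/-- The product `m_∞` over `ℕ` of Lebesgue measure on `[0,1]`, realised as the pushforward of
the Haar probability measure of the compact group `(ℝ/ℤ)^ℕ` under the coordinatewise choice of
representatives in `[0,1)`. -/
noncomputable def mInfty : Measure (ℕ → ℝ) :=
  Measure.map (fun (t : ℕ → Circle1) (n : ℕ) => rep (t n))
    (MeasureTheory.Measure.addHaarMeasure (⊤ : TopologicalSpace.PositiveCompacts (ℕ → Circle1)))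

/-- `S` is an `N`-dimensionally shy subset of a normed real vector space `V`. -/
def NDimShy {V : Type*} [NormedAddCommGroup V] [NormedSpace ℝ V] (N : ℕ) (S : Set V) : Prop :=
  ∃ φ : Fin N → V, ∀ f : V,
    volume {t : Fin N → ℝ | (∀ i, t i ∈ Set.Icc (0 : ℝ) 1) ∧ f + ∑ i, t i • φ i ∈ S} = 0

/-- `S` is a finite dimensionally shy subset of a normed real vector space `V`. -/
def FinDimShy {V : Type*} [NormedAddCommGroup V] [NormedSpace ℝ V] (S : Set V) : Prop :=
  ∃ N : ℕ, 0 < N ∧ NDimShy N S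

/-- `S` is a shy subset of `V`: there are a compactly supported Borel probability measure `μ`
on `V` and a Borel set `S̃ ⊇ S` all of whose translates are `μ`-null. -/
def IsShy {V : Type*} [NormedAddCommGroup V] [NormedSpace ℝ V] (S : Set V) : Prop :=
  letI : MeasurableSpace V := borel V
  ∃ μ : Measure V, μ Set.univ = 1 ∧ (∃ K : Set V, IsCompact K ∧ μ K = 1) ∧
    ∃ St : Set V, MeasurableSet St ∧ S ⊆ St ∧
      ∀ v : V, μ ((fun x => x + v) ⁻¹' St) = 0

/-- `S` is a prevalent subset of `V`. -/
def IsPrevalent {V : Type*} [NormedAddCommGroup V] [NormedSpace ℝ V] (S : Set V) : Prop :=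
  IsShy Sᶜ

/-- `F` is the (normalized) lift of an orientation-preserving real analytic expanding circle
map of degree `d` fixing `π(0)`. -/
def AnalyticExpandingLift (F : ℝ → ℝ) (d : ℕ) : Prop :=
  (∀ x : ℝ, AnalyticAt ℝ F x) ∧ (∀ x : ℝ, F (x + 1) = F x + d) ∧ StrictMono F ∧ F 0 = 0 ∧
    2 ≤ d ∧ ∃ C > (0 : ℝ), ∃ l > (1 : ℝ), ∀ n : ℕ, 1 ≤ n → ∀ x : ℝ, C * l ^ n ≤ |deriv (F^[n]) x|

/-- The inverse branches `τ_{i,n} = τ_{i_n} ∘ ⋯ ∘ τ_{i_1}`, where `τ = F⁻¹` and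
`τ_i(x) = τ(x+i)`; the word `i` is indexed from `0`, so `i 0` is the first letter `i_1`. -/
noncomputable def tauIter (F : ℝ → ℝ) {d : ℕ} (i : ℕ → Fin d) : ℕ → ℝ → ℝ
  | 0, x => x
  | n + 1, x => Function.invFun F (tauIter F i n x + ((i n : ℕ) : ℝ))

/-- The function `h^f_i` associated to an infinite word `i`. -/
noncomputable def hSum (F : ℝ → ℝ) {d : ℕ} (i : ℕ → Fin d) (f : Circle1 → ℝ) : ℝ → ℝ :=
  fun x => ∑' n : ℕ,
    (f ((tauIter F i (n + 1) x : ℝ) : Circle1) - f ((tauIter F i (n + 1) 0 : ℝ) : Circle1))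

/-- The function `h^f_i` associated to a finite word of length `m` (the first `m` letters
of `i`). -/
noncomputable def hSumFin (F : ℝ → ℝ) {d : ℕ} (i : ℕ → Fin d) (m : ℕ) (f : Circle1 → ℝ) :
    ℝ → ℝ :=
  fun x => ∑ n ∈ Finset.range m,
    (f ((tauIter F i (n + 1) x : ℝ) : Circle1) - f ((tauIter F i (n + 1) 0 : ℝ) : Circle1))

/-- `i ∈ CL(x,K)`: all backward images of `x` along the word `i` lie over `K`. -/
def WordIn (F : ℝ → ℝ) {d : ℕ} (i : ℕ → Fin d) (x : ℝ) (K : Set Circle1) : Prop :=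
  ∀ n : ℕ, 1 ≤ n → ((tauIter F i n x : ℝ) : Circle1) ∈ K

/-- `x` (a real, lying over `K`) is an `f`-supercritical value of `K`. -/
def IsSupercriticalValue (F : ℝ → ℝ) (d : ℕ) (f : Circle1 → ℝ) (K : Set Circle1) (x : ℝ) :
    Prop :=
  ((x : ℝ) : Circle1) ∈ K ∧ ∃ i j : ℕ → Fin d, WordIn F i x K ∧ WordIn F j x K ∧ i 0 ≠ j 0 ∧
    deriv (hSum F i f) x = deriv (hSum F j f) x

/-- `x` is a critical value of `T|K`. -/
def IsCriticalValue (T : Circle1 → Circle1) (K : Set Circle1) (x : Circle1) : Prop :=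
  x ∈ K ∧ ∃ y z, y ∈ K ∧ z ∈ K ∧ y ≠ z ∧ T y = x ∧ T z = x

/-- A critical value `x` of `T|K` is regular: on each side of `x` there is a continuous
inverse branch of `T` selecting the unique preimage in `K`. -/
def IsRegularCriticalValue (T : Circle1 → Circle1) (K : Set Circle1) (x : Circle1) : Prop :=
  ∃ U : Set Circle1, U ∈ 𝓝 x ∧ IsConnected U ∧
    ∀ b ∈ U \ {x}, ∃ s : Circle1 → Circle1,
      ContinuousOn s (connectedComponentIn (U \ {x}) b) ∧
      (∀ y ∈ connectedComponentIn (U \ {x}) b, T (s y) = y) ∧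
      (∀ y ∈ K ∩ connectedComponentIn (U \ {x}) b, T ⁻¹' {y} ∩ K = {s y})

/-- `T|K` is Sturmian-like: every critical value is regular. -/
def SturmianLike (T : Circle1 → Circle1) (K : Set Circle1) : Prop :=
  ∀ x, IsCriticalValue T K x → IsRegularCriticalValue T K x

/-- `f : ℝ/ℤ → ℝ` is a trigonometric polynomial. -/
def IsTrigPoly (f : Circle1 → ℝ) : Prop :=
  ∃ m : ℕ, ∃ a b : ℕ → ℝ, ∀ x : ℝ,
    f ↑x = a 0 + ∑ k ∈ Finset.range m,
      (a (k + 1) * Real.cos (2 * Real.pi * (k + 1) * x) +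
        b (k + 1) * Real.sin (2 * Real.pi * (k + 1) * x))

end

/-!
Normalise `φ = f - β(f, T)`, so that sums of `φ` over periodic orbits are nonpositive. If
`Ω(f, T)` is a periodic orbit, then its sum vanishes, and there is a gap: the sums of `φ` over all
other periodic orbits are bounded above by a negative constant. Otherwise pulling back periodic
orbits with sums tending to `0` and passing to a limit by compactness would produce further
non-wandering points. Conversely, such a gap at a periodic orbit with vanishing sum forces
`Ω(f, T)` to be this orbit.

The constants in the closing lemma and in expansivity can be chosen uniformly for all maps
`C¹`-close to `T`, because the adapted metric `∑ |Fⁱ x - Fⁱ y|` of a lift `F` is still expanded by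
nearby lifts. For `(f', T')` near `(f, T)`, a nearly closed orbit segment of `T'` with nearly
maximal sum is closed up for `T` to a periodic orbit with nearly maximal sum, which by the gap is
the orbit `Ω(f, T)`. By expansivity the segment thus follows the continuation of this orbit for
`T'`, and `Ω(f', T')` is that continuation. Hence periodicity of `Ω(f_t, T)` is an open condition
on `((f_t), T, t)`, and inner regularity of Lebesgue measure gives the theorem.
-/

open Function NNReal

namespace ErgodicOptimization

/-- Quantitative consequences of uniform expansion, with explicit constants so that they can be
required uniformly for all maps near a given one: orbit segments can be pulled back (`pull`) and
closed up to periodic orbits (`close`) with a summable error, and distinct orbits separate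
(`expansive`). -/
structure IsExpandingWith {X : Type*} [MetricSpace X] (A : ℝ≥0) (r : ℝ) (T : X → X) : Prop where
  one_le : 1 ≤ A
  r_pos : 0 < r
  lipschitz : LipschitzWith A T
  pull : ∀ x n u, ∃ w, T^[n] w = u ∧
    ∑ i ∈ Finset.range (n + 1), dist (T^[i] w) (T^[i] x) ≤ A * dist u (T^[n] x)
  close : ∀ x n, 0 < n → ∃ w, IsPeriodicPt T n w ∧
    ∑ i ∈ Finset.range (n + 1), dist (T^[i] w) (T^[i] x) ≤ A * dist (T^[n] x) x
  expansive : ∀ x y, (∀ i, dist (T^[i] x) (T^[i] y) ≤ r) → x = y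

/-- All Birkhoff sums of `φ` over periodic orbits are nonpositive; this holds for
`φ = f - β(f,T)`. -/
def NonposOnPeriodic {X : Type*} (T : X → X) (φ : X → ℝ) : Prop :=
  ∀ ⦃n y⦄, IsPeriodicPt T n y → birkhoffSum T φ n y ≤ 0

/-- The orbit of `Q` contains every periodic point whose Birkhoff sum exceeds `-c`. -/
def IsIsolatedOrbit {X : Type*} (T : X → X) (φ : X → ℝ) (c : ℝ) (Q : X) : Prop :=
  ∀ ⦃n y⦄, 0 < n → IsPeriodicPt T n y → -c < birkhoffSum T φ n y → ∃ a, T^[a] Q = y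

/-- The non-wandering set of `T` with respect to the normalised function `φ = f - β(f,T)`. -/
def nonwanderingSet {X : Type*} [MetricSpace X] (T : X → X) (φ : X → ℝ) : Set X :=
  {x | ∀ ε > 0, ∃ n, 1 ≤ n ∧ ∃ z, T^[n] z = x ∧ dist z x < ε ∧ |birkhoffSum T φ n z| < ε}

section Periodic

variable {X : Type*} {T : X → X} {φ : X → ℝ} {n p : ℕ} {y : X}

lemma birkhoffSum_iterate_of_isPeriodicPt (hy : IsPeriodicPt T n y) (i : ℕ) :
    birkhoffSum T φ n (T^[i] y) = birkhoffSum T φ n y := by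
  have := birkhoffSum_add T φ i n y
  rw [add_comm i n, birkhoffSum_add, hy.eq] at this
  linarith

lemma birkhoffSum_mul_of_isPeriodicPt (hy : IsPeriodicPt T n y) (k : ℕ) :
    birkhoffSum T φ (k * n) y = k * birkhoffSum T φ n y := by
  induction k with
  | zero => simp
  | succ k ih =>
    rw [Nat.succ_mul, birkhoffSum_add, (hy.const_mul k).eq, ih]
    push_cast
    ring

lemma mul_birkhoffSum_eq_of_isPeriodicPt (hn : IsPeriodicPt T n y) (hp : IsPeriodicPt T p y) :
    p * birkhoffSum T φ n y = n * birkhoffSum T φ p y := by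
  rw [← birkhoffSum_mul_of_isPeriodicPt hn, ← birkhoffSum_mul_of_isPeriodicPt hp, mul_comm]

lemma exists_iterate_eq_of_isPeriodicPt (hp : 0 < p) (hy : IsPeriodicPt T p y) (a : ℕ) :
    ∃ b, T^[b] (T^[a] y) = y := by
  refine ⟨a * (p - 1), ?_⟩
  rw [← iterate_add_apply, ← Nat.mul_succ, Nat.succ_eq_add_one, Nat.sub_add_cancel hp]
  exact hy.const_mul a

lemma finite_range_iterate (hp : 0 < p) (hy : IsPeriodicPt T p y) :
    (range fun k => T^[k] y).Finite := by
  refine ((Finset.range p).finite_toSet.image fun k => T^[k] y).subset ?_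
  rintro _ ⟨k, rfl⟩
  exact ⟨k % p, by simpa using Nat.mod_lt k hp, hy.iterate_mod_apply k⟩

end Periodic

section Expanding

variable {X : Type*} [MetricSpace X] {A B : ℝ≥0} {r : ℝ} {T : X → X} {φ : X → ℝ}

lemma abs_birkhoffSum_sub_le (hφ : LipschitzWith A φ) (n : ℕ) (x y : X) :
    |birkhoffSum T φ n x - birkhoffSum T φ n y| ≤
      A * ∑ i ∈ Finset.range n, dist (T^[i] x) (T^[i] y) := by
  rw [Finset.mul_sum]
  exact (dist_birkhoffSum_birkhoffSum_le ..).trans (Finset.sum_le_sum fun _ _ => hφ.dist_le_mul _ _)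

lemma dist_iterate_le_of_sum_le {n : ℕ} {x w : X} {e : ℝ}
    (h : ∑ i ∈ Finset.range (n + 1), dist (T^[i] w) (T^[i] x) ≤ e) {i : ℕ} (hi : i ≤ n) :
    dist (T^[i] w) (T^[i] x) ≤ e :=
  (Finset.single_le_sum (f := fun i => dist (T^[i] w) (T^[i] x)) (fun _ _ => dist_nonneg)
    (Finset.mem_range_succ_iff.2 hi)).trans h

lemma abs_birkhoffSum_sub_le_of_sum_le (hφ : LipschitzWith A φ) {n : ℕ} {x w : X} {e : ℝ}
    (h : ∑ i ∈ Finset.range (n + 1), dist (T^[i] w) (T^[i] x) ≤ A * e) :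
    |birkhoffSum T φ n w - birkhoffSum T φ n x| ≤ A ^ 2 * e := by
  refine (abs_birkhoffSum_sub_le hφ n w x).trans ?_
  rw [sq, mul_assoc]
  refine mul_le_mul_of_nonneg_left (le_trans ?_ h) A.2
  rw [Finset.sum_range_succ]
  exact le_add_of_nonneg_right dist_nonneg

namespace IsExpandingWith

lemma mono (hT : IsExpandingWith A r T) (hAB : A ≤ B) : IsExpandingWith B r T where
  one_le := hT.one_le.trans hAB
  r_pos := hT.r_pos
  lipschitz := hT.lipschitz.weaken hAB
  pull x n u := (hT.pull x n u).imp fun _ h => ⟨h.1, h.2.trans (by gcongr)⟩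
  close x n hn := (hT.close x n hn).imp fun _ h => ⟨h.1, h.2.trans (by gcongr)⟩
  expansive := hT.expansive

lemma exists_pull (hT : IsExpandingWith A r T) (hφ : LipschitzWith A φ) (x : X) (n : ℕ) (u : X) :
    ∃ w, T^[n] w = u ∧ (∀ i ≤ n, dist (T^[i] w) (T^[i] x) ≤ A * dist u (T^[n] x)) ∧
      |birkhoffSum T φ n w - birkhoffSum T φ n x| ≤ A ^ 2 * dist u (T^[n] x) := by
  obtain ⟨w, hw, hsum⟩ := hT.pull x n u
  exact ⟨w, hw, fun i hi => dist_iterate_le_of_sum_le hsum hi,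
    abs_birkhoffSum_sub_le_of_sum_le hφ hsum⟩

lemma exists_close (hT : IsExpandingWith A r T) (hφ : LipschitzWith A φ) (x : X) {n : ℕ}
    (hn : 0 < n) :
    ∃ w, IsPeriodicPt T n w ∧ (∀ i ≤ n, dist (T^[i] w) (T^[i] x) ≤ A * dist (T^[n] x) x) ∧
      |birkhoffSum T φ n w - birkhoffSum T φ n x| ≤ A ^ 2 * dist (T^[n] x) x := by
  obtain ⟨w, hw, hsum⟩ := hT.close x n hn
  exact ⟨w, hw, fun i hi => dist_iterate_le_of_sum_le hsum hi,
    abs_birkhoffSum_sub_le_of_sum_le hφ hsum⟩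

lemma birkhoffSum_le (hT : IsExpandingWith A r T) (hφ : LipschitzWith A φ)
    (hneg : NonposOnPeriodic T φ) (n : ℕ) (x : X) :
    birkhoffSum T φ n x ≤ A ^ 2 * dist (T^[n] x) x := by
  rcases n.eq_zero_or_pos with rfl | hn
  · simp
  · obtain ⟨w, hw, -, hsum⟩ := hT.exists_close hφ x hn
    linarith [(abs_le.1 hsum).1, hneg hw]

/-- The remainder of `m` turns around the orbit is a nearly closed segment, whose sum is
essentially nonpositive. -/
lemma mul_birkhoffSum_le (hT : IsExpandingWith A r T) (hφ : LipschitzWith A φ)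
    (hneg : NonposOnPeriodic T φ) {n : ℕ} {y : X} (hn : 0 < n) (hy : IsPeriodicPt T n y) (m : ℕ) :
    m * birkhoffSum T φ n y ≤ birkhoffSum T φ m y + A ^ 2 * dist (T^[m] y) y := by
  obtain ⟨k, hk⟩ := Nat.exists_eq_add_of_le (Nat.le_mul_of_pos_right m hn)
  have hyk : T^[k] (T^[m] y) = y := by
    rw [← iterate_add_apply, add_comm, ← hk]
    exact hy.const_mul m
  have hrem := hT.birkhoffSum_le hφ hneg k (T^[m] y)
  rw [hyk, dist_comm] at hrem
  rw [← birkhoffSum_mul_of_isPeriodicPt hy, hk, birkhoffSum_add]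
  linarith

end IsExpandingWith

lemma exists_pigeonhole [CompactSpace X] {ε : ℝ} (hε : 0 < ε) :
    ∃ N : ℕ, ∀ u : ℕ → X, ∃ i j, i < j ∧ j ≤ N ∧ dist (u i) (u j) < ε := by
  obtain ⟨t, ht, hcov⟩ := Metric.totallyBounded_iff.1
    (isCompact_univ (X := X)).totallyBounded (ε / 2) (half_pos hε)
  have hcenter : ∀ x : X, ∃ y ∈ t, dist x y < ε / 2 := fun x => by simpa using hcov (mem_univ x)
  choose c hct hcd using hcenter
  refine ⟨ht.toFinset.card, fun u => ?_⟩
  obtain ⟨i, hi, j, hj, hij, he⟩ := Finset.exists_ne_map_eq_of_card_lt_of_maps_to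
    (s := Finset.range (ht.toFinset.card + 1)) (t := ht.toFinset) (by simp)
    (f := fun i => c (u i)) (fun i _ => by simpa using hct (u i))
  wlog hlt : i < j generalizing i j
  · exact this j hj i hi hij.symm he.symm (hij.lt_or_gt.resolve_left hlt)
  refine ⟨i, j, hlt, Finset.mem_range_succ_iff.1 hj, ?_⟩
  calc dist (u i) (u j) ≤ dist (u i) (c (u i)) + dist (u j) (c (u i)) := dist_triangle_right ..
    _ < ε / 2 + ε / 2 := add_lt_add (hcd _) (by simpa only [he] using hcd (u j))
    _ = ε := add_halves ε

namespace IsExpandingWith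

variable [CompactSpace X]

/-- A long periodic orbit nearly returns within bounded time; cutting there and closing both
pieces gives shorter periodic orbits, whose sums are bounded inductively. -/
lemma exists_birkhoffSum_le_neg_mul (hT : IsExpandingWith A r T) (hφ : LipschitzWith A φ)
    {c : ℝ} (hc : 0 < c)
    (hneg : ∀ ⦃n y⦄, 0 < n → IsPeriodicPt T n y → birkhoffSum T φ n y ≤ -c) :
    ∃ c' > 0, ∀ ⦃n y⦄, 0 < n → IsPeriodicPt T n y → birkhoffSum T φ n y ≤ -(c' * n) := by
  obtain ⟨e, he, hec⟩ := exists_pos_mul_lt (half_pos hc) (2 * A ^ 2)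
  obtain ⟨N, hN⟩ := exists_pigeonhole (X := X) he
  have hshort : ∀ n ≤ N, c / (2 * (N + 1)) * n ≤ c / 2 := by
    intro n hn
    have : (n : ℝ) ≤ N + 1 := by exact_mod_cast hn.trans N.le_succ
    rw [div_mul_eq_mul_div, div_le_div_iff₀ (by positivity) two_pos]
    nlinarith
  refine ⟨c / (2 * (N + 1)), by positivity, fun n => ?_⟩
  induction n using Nat.strong_induction_on with | _ n ih =>
  intro y hn hy
  rcases le_or_gt n N with hnN | hnN
  · linarith [hneg hn hy, hshort n hnN]
  obtain ⟨i, j, hij, hjN, hdist⟩ := hN fun i => T^[i] y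
  obtain ⟨m, hm, rfl⟩ : ∃ m, 0 < m ∧ j = m + i := ⟨j - i, by omega, by omega⟩
  obtain ⟨k, rfl⟩ := Nat.exists_eq_add_of_lt (show m < n by omega)
  set x := T^[i] y
  have hx : IsPeriodicPt T (m + k + 1) x := hy.apply_iterate i
  rw [iterate_add_apply, dist_comm] at hdist
  have hreturn : T^[k + 1] (T^[m] x) = x := by
    rw [← iterate_add_apply, add_comm, ← add_assoc]
    exact hx
  obtain ⟨w, hw, -, hwsum⟩ := hT.exists_close hφ x hm
  obtain ⟨v, hv, -, hvsum⟩ := hT.exists_close hφ (T^[m] x) k.succ_pos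
  rw [hreturn, dist_comm] at hvsum
  have hA : A ^ 2 * dist (T^[m] x) x ≤ A ^ 2 * e := by gcongr
  have hwle := hneg hm hw
  have hvle := ih (k + 1) (by omega) k.succ_pos hv
  have hmle := hshort m (by omega)
  rw [← birkhoffSum_iterate_of_isPeriodicPt hy i, add_assoc, birkhoffSum_add, Nat.cast_add, mul_add]
  linarith [(abs_le.1 hwsum).1, (abs_le.1 hvsum).1]

lemma exists_forall_birkhoffSum_le (hT : IsExpandingWith A r T) (hφ : LipschitzWith A φ)
    {c : ℝ} (hc : 0 < c)
    (hneg : ∀ ⦃n y⦄, 0 < n → IsPeriodicPt T n y → birkhoffSum T φ n y ≤ -c) :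
    ∃ c' > 0, ∀ n x, birkhoffSum T φ n x ≤ A ^ 2 * Metric.diam (univ : Set X) - c' * n := by
  obtain ⟨c', hc', h⟩ := hT.exists_birkhoffSum_le_neg_mul hφ hc hneg
  refine ⟨c', hc', fun n x => ?_⟩
  have hdiam : 0 ≤ A ^ 2 * Metric.diam (univ : Set X) := by positivity
  rcases n.eq_zero_or_pos with rfl | hn
  · simpa using hdiam
  · obtain ⟨w, hw, -, hsum⟩ := hT.exists_close hφ x hn
    have : A ^ 2 * dist (T^[n] x) x ≤ A ^ 2 * Metric.diam (univ : Set X) := by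
      gcongr
      exact Metric.dist_le_diam_of_mem isCompact_univ.isBounded (mem_univ _) (mem_univ _)
    linarith [(abs_le.1 hsum).1, h hn hw]

end IsExpandingWith

end Expanding

section Integral

variable {X : Type*} [MeasurableSpace X] {μ : Measure X} {T : X → X} {φ : X → ℝ}

lemma integral_birkhoffSum (hT : MeasurePreserving T μ μ) (hφ : Integrable φ μ) (n : ℕ) :
    ∫ x, birkhoffSum T φ n x ∂μ = n * ∫ x, φ x ∂μ := by
  have hcomp (i : ℕ) : ∫ x, φ (T^[i] x) ∂μ = ∫ x, φ x ∂μ := by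
    have hmap := (hT.iterate i).map_eq
    conv_rhs => rw [← hmap]
    exact (integral_map (hT.iterate i).aemeasurable (hmap.symm ▸ hφ.1)).symm
  simp only [birkhoffSum]
  rw [integral_finsetSum (f := fun i x => φ (T^[i] x)) _ fun i _ =>
    (hT.iterate i).integrable_comp_of_integrable hφ]
  simp only [hcomp, Finset.sum_const, Finset.card_range, nsmul_eq_mul]

lemma integrable_birkhoffSum (hT : MeasurePreserving T μ μ) (hφ : Integrable φ μ) (n : ℕ) :
    Integrable (birkhoffSum T φ n) μ :=
  integrable_finsetSum _ fun i _ => (hT.iterate i).integrable_comp_of_integrable hφ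

lemma integral_le_neg_of_birkhoffSum_le [IsProbabilityMeasure μ] (hT : MeasurePreserving T μ μ)
    (hφ : Integrable φ μ) {C c : ℝ} (h : ∀ n x, birkhoffSum T φ n x ≤ C - c * n) :
    ∫ x, φ x ∂μ ≤ -c := by
  have hn (n : ℕ) : n * ∫ x, φ x ∂μ ≤ C - c * n := by
    rw [← integral_birkhoffSum hT hφ]
    simpa using integral_mono (integrable_birkhoffSum hT hφ n) (integrable_const _) (h n)
  by_contra! hlt
  obtain ⟨n, hC⟩ := exists_nat_gt (C / (∫ x, φ x ∂μ + c))
  rw [div_lt_iff₀ (by linarith)] at hC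
  linarith [hn n]

end Integral

section Isolated

variable {X : Type*} {c : ℝ} {T : X → X} {φ : X → ℝ} {p : ℕ} {Q : X}

lemma IsIsolatedOrbit.birkhoffSum_eq_zero (hc : 0 < c) (hiso : IsIsolatedOrbit T φ c Q)
    (hneg : NonposOnPeriodic T φ)
    (hmax : ∀ d > 0, ∃ n y, 0 < n ∧ IsPeriodicPt T n y ∧ -d < birkhoffSum T φ n y)
    (hQ : IsPeriodicPt T p Q) : birkhoffSum T φ p Q = 0 := by
  refine (hneg hQ).antisymm (not_lt.1 fun hlt => ?_)
  obtain ⟨d, hd, hdp⟩ := exists_pos_mul_lt (neg_pos.2 hlt) p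
  obtain ⟨n, y, hn, hy, hsum⟩ := hmax (min c d) (lt_min hc hd)
  obtain ⟨a, rfl⟩ := hiso hn hy (by linarith [min_le_left c d])
  have hratio := mul_birkhoffSum_eq_of_isPeriodicPt (φ := φ) hy (hQ.apply_iterate a)
  rw [birkhoffSum_iterate_of_isPeriodicPt hQ] at hratio
  have hn' : (1 : ℝ) ≤ n := by exact_mod_cast hn
  nlinarith [min_le_right c d, p.cast_nonneg (α := ℝ)]

end Isolated

section Nonwandering

variable {X : Type*} [MetricSpace X] {A : ℝ≥0} {r c : ℝ} {T : X → X} {φ : X → ℝ} {p : ℕ} {Q : X}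

lemma iterate_mem_nonwanderingSet (hp : 0 < p) (hQ : IsPeriodicPt T p Q)
    (hzero : birkhoffSum T φ p Q = 0) (k : ℕ) : T^[k] Q ∈ nonwanderingSet T φ := fun ε hε =>
  ⟨p, hp, T^[k] Q, hQ.apply_iterate k, by rwa [dist_self],
    by rwa [birkhoffSum_iterate_of_isPeriodicPt hQ, hzero, abs_zero]⟩

lemma IsIsolatedOrbit.nonwanderingSet_subset_closure (hT : IsExpandingWith A r T)
    (hφ : LipschitzWith A φ) (hc : 0 < c) (hiso : IsIsolatedOrbit T φ c Q) :
    nonwanderingSet T φ ⊆ closure (range fun k => T^[k] Q) := by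
  intro x hx
  rw [Metric.mem_closure_iff]
  intro ε hε
  obtain ⟨e₁, he₁, hec⟩ := exists_pos_mul_lt hc (1 + A ^ 2)
  obtain ⟨e₂, he₂, heε⟩ := exists_pos_mul_lt hε (1 + A)
  obtain ⟨n, hn, z, hz, hzx, hsum⟩ := hx (min e₁ e₂) (lt_min he₁ he₂)
  obtain ⟨w, hw, hwz, hwsum⟩ := hT.exists_close hφ z hn
  rw [hz, dist_comm] at hwz hwsum
  have he₁' := min_le_left e₁ e₂
  have he₂' := min_le_right e₁ e₂
  obtain ⟨a, ha⟩ := hiso hn hw <| by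
    have : A ^ 2 * dist z x ≤ A ^ 2 * e₁ := by gcongr; linarith
    linarith [(abs_le.1 hwsum).1, (abs_lt.1 hsum).1]
  refine ⟨w, ⟨a, ha⟩, ?_⟩
  have hwz0 : dist w z ≤ A * dist x z := by simpa [dist_comm] using hwz 0 n.zero_le
  have : A * dist x z ≤ A * e₂ := by rw [dist_comm]; gcongr; linarith
  linarith [dist_triangle_right x w z, dist_comm x z]

lemma IsIsolatedOrbit.nonwanderingSet_eq (hT : IsExpandingWith A r T) (hφ : LipschitzWith A φ)
    (hc : 0 < c) (hiso : IsIsolatedOrbit T φ c Q) (hneg : NonposOnPeriodic T φ)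
    (hmax : ∀ d > 0, ∃ n y, 0 < n ∧ IsPeriodicPt T n y ∧ -d < birkhoffSum T φ n y)
    (hp : 0 < p) (hQ : IsPeriodicPt T p Q) :
    nonwanderingSet T φ = range fun k => T^[k] Q := by
  refine Subset.antisymm ?_ ?_
  · rw [← (finite_range_iterate hp hQ).isClosed.closure_eq]
    exact hiso.nonwanderingSet_subset_closure hT hφ hc
  · rintro _ ⟨k, rfl⟩
    exact iterate_mem_nonwanderingSet hp hQ (hiso.birkhoffSum_eq_zero hc hneg hmax hQ) k

end Nonwandering

section Tracking

variable {X : Type*} [MetricSpace X] {A : ℝ≥0} {r : ℝ} {T T₀ : X → X} {φ : X → ℝ} {p : ℕ} {Q : X}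

lemma exists_orbit_separation (hp : 0 < p) (hQ : IsPeriodicPt T p Q) :
    ∃ s > 0, ∀ a b, dist (T^[a] Q) (T^[b] Q) < s → T^[a] Q = T^[b] Q := by
  have hfin := finite_range_iterate hp hQ
  rcases (range fun k => T^[k] Q).subsingleton_or_nontrivial with hsub | hnon
  · exact ⟨1, one_pos, fun a b _ => hsub (mem_range_self a) (mem_range_self b)⟩
  · refine ⟨_, hfin.infsep_pos_iff_nontrivial.2 hnon, fun a b hlt => ?_⟩
    by_contra hne
    exact hlt.not_ge (infsep_le_dist_of_mem (mem_range_self a) (mem_range_self b) hne)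

lemma dist_iterate_le_of_near_orbit (hT₀ : LipschitzWith A T₀) {s δ η : ℝ}
    (hsep : ∀ a b, dist (T₀^[a] Q) (T₀^[b] Q) < s → T₀^[a] Q = T₀^[b] Q)
    (hδ : δ + A * δ + η < s) {y : X} {m : ℕ}
    (hnear : ∀ k < m, dist (T (T^[k] y)) (T₀ (T^[k] y)) ≤ η)
    (hy : ∀ k ≤ m, ∃ a, dist (T^[k] y) (T₀^[a] Q) ≤ δ) {a : ℕ} (ha : dist y (T₀^[a] Q) ≤ δ) :
    dist (T^[m] y) (T₀^[a + m] Q) ≤ δ := by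
  induction m with
  | zero => exact ha
  | succ k ih =>
    have hprev := ih (fun j hj => hnear j (by omega)) fun j hj => hy j (by omega)
    obtain ⟨b, hb⟩ := hy (k + 1) le_rfl
    have hphase : T₀^[b] Q = T₀^[a + (k + 1)] Q := by
      refine hsep _ _ (lt_of_le_of_lt ?_ hδ)
      rw [← add_assoc, iterate_succ_apply' T₀ (a + k)]
      rw [iterate_succ_apply'] at hb
      have hlip : dist (T₀ (T^[k] y)) (T₀ (T₀^[a + k] Q)) ≤ A * δ :=
        (hT₀.dist_le_mul _ _).trans (by gcongr)
      linarith [dist_triangle_left (T₀^[b] Q) (T₀ (T₀^[a + k] Q)) (T (T^[k] y)),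
        dist_triangle (T (T^[k] y)) (T₀ (T^[k] y)) (T₀ (T₀^[a + k] Q)), hnear k k.lt_succ_self]
    rwa [← hphase]

end Tracking

section Gap

variable {X : Type*} [MetricSpace X] {A : ℝ≥0} {r : ℝ} {T T₀ : X → X} {φ : X → ℝ} {p : ℕ}
  {Q y₀ : X}

lemma exists_iterate_eq_of_near_orbit (hT : IsExpandingWith A r T) (hT₀ : LipschitzWith A T₀)
    {s δ η κ : ℝ} (hsep : ∀ a b, dist (T₀^[a] Q) (T₀^[b] Q) < s → T₀^[a] Q = T₀^[b] Q)
    (hδs : δ + A * δ + η < s) (hδr : δ + κ ≤ r) (hnear : ∀ x, dist (T x) (T₀ x) ≤ η)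
    (hy₀ : ∀ k, dist (T^[k] y₀) (T₀^[k] Q) ≤ κ) {y : X}
    (hy : ∀ k, ∃ a, dist (T^[k] y) (T₀^[a] Q) ≤ δ) : ∃ a, T^[a] y₀ = y := by
  obtain ⟨a, ha⟩ := hy 0
  refine ⟨a, (hT.expansive _ _ fun k => ?_).symm⟩
  have hyk := dist_iterate_le_of_near_orbit hT₀ hsep hδs (fun j _ => hnear (T^[j] y))
    (fun j _ => hy j) ha (m := k)
  rw [← iterate_add_apply, add_comm k]
  linarith [dist_triangle_right (T^[k] y) (T^[a + k] y₀) (T₀^[a + k] Q), hy₀ (a + k)]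

/-- Pulling a nearby periodic orbit back from `x` exhibits `x` as non-wandering unless the sum of
that orbit is bounded away from `0`. -/
lemma eventually_birkhoffSum_le_neg_of_notMem_nonwanderingSet (hT : IsExpandingWith A r T)
    (hφ : LipschitzWith A φ) (hneg : NonposOnPeriodic T φ) {x : X}
    (hx : x ∉ nonwanderingSet T φ) :
    ∀ᶠ z : ℝ × X in 𝓝 (0, x), ∀ n, 0 < n → IsPeriodicPt T n z.2 → birkhoffSum T φ n z.2 ≤ -z.1 := by
  simp only [nonwanderingSet, mem_ofPred_eq, not_forall] at hx
  obtain ⟨ε, hε, hno⟩ := hx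
  obtain ⟨e, he, heε⟩ := exists_pos_mul_lt (half_pos hε) (1 + A + A ^ 2)
  filter_upwards [prod_mem_nhds (Iio_mem_nhds (half_pos hε)) (Metric.ball_mem_nhds x he)]
    with ⟨c, y⟩ ⟨hc, hy⟩ n hn hyn
  by_contra! hlt
  obtain ⟨z, hz, hzy, hsum⟩ := hT.exists_pull hφ y n x
  rw [hyn.eq, dist_comm x] at hzy hsum
  have hy : dist y x < e := hy
  have hA : A * dist y x ≤ A * e := by gcongr
  have hA2 : A ^ 2 * dist y x ≤ A ^ 2 * e := by gcongr
  refine hno ⟨n, hn, z, hz, ?_, abs_lt.2 ?_⟩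
  · have hzy0 : dist z y ≤ A * dist y x := by simpa using hzy 0 n.zero_le
    nlinarith [dist_triangle z y x]
  · have hA0 : 0 ≤ A * e := by positivity
    rw [abs_le] at hsum
    have hc : c < ε / 2 := hc
    constructor <;> linarith [hneg hyn]

lemma exists_isIsolatedOrbit [CompactSpace X] (hT : IsExpandingWith A r T)
    (hφ : LipschitzWith A φ) (hneg : NonposOnPeriodic T φ) (hp : 0 < p) (hQ : IsPeriodicPt T p Q)
    (hΩ : nonwanderingSet T φ = range fun k => T^[k] Q) : ∃ c > 0, IsIsolatedOrbit T φ c Q := by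
  obtain ⟨s, hs, hsep⟩ := exists_orbit_separation hp hQ
  obtain ⟨e, he, hes⟩ := exists_pos_mul_lt hs (1 + A)
  set δ := min e r
  have hδ : 0 < δ := lt_min he hT.r_pos
  have hK : IsCompact {x | ∀ a, δ ≤ dist x (T^[a] Q)} := by
    rw [ofPred_forall]
    exact (isClosed_iInter fun a => isClosed_le continuous_const (by fun_prop)).isCompact
  have hev := hK.eventually_forall_of_forall_eventually (x₀ := (0 : ℝ))
    (P := fun c y => ∀ n, 0 < n → IsPeriodicPt T n y → birkhoffSum T φ n y ≤ -c) fun x hx =>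
      eventually_birkhoffSum_le_neg_of_notMem_nonwanderingSet hT hφ hneg <| by
        rw [hΩ]
        rintro ⟨a, rfl⟩
        exact hδ.not_ge ((hx a).trans_eq (dist_self _))
  obtain ⟨c, hcK, hc⟩ := ((hev.filter_mono nhdsWithin_le_nhds).and
    (self_mem_nhdsWithin (s := Ioi 0))).exists
  refine ⟨c, hc, fun n y hn hy hlt => ?_⟩
  have hδe : A * δ ≤ A * e := by gcongr; exact min_le_left e r
  refine exists_iterate_eq_of_near_orbit (δ := δ) (η := 0) (κ := 0) hT hT.lipschitz hsep
    (by linarith [min_le_left e r]) (by linarith [min_le_right e r]) (by simp) (by simp)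
    fun k => ?_
  by_contra! hfar
  have := hcK (T^[k] y) (fun a => (hfar a).le) n hn (hy.apply_iterate k)
  rw [birkhoffSum_iterate_of_isPeriodicPt hy] at this
  linarith

end Gap

/-! ### Stability under perturbation -/

lemma tendstoUniformly_iterate {ι X : Type*} [PseudoMetricSpace X] {l : Filter ι} {T : ι → X → X}
    {T₀ : X → X} (hT : TendstoUniformly T T₀ l) (hT₀ : UniformContinuous T₀) (n : ℕ) :
    TendstoUniformly (fun i => (T i)^[n]) T₀^[n] l := by
  induction n with
  | zero => exact Metric.tendstoUniformly_iff.2 fun ε hε => .of_forall fun i x => by simpa using hε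
  | succ n ih =>
    rw [Metric.tendstoUniformly_iff] at hT ⊢
    intro ε hε
    filter_upwards [hT _ (half_pos hε), Metric.tendstoUniformly_iff.1
      (hT₀.comp_tendstoUniformly ih) _ (half_pos hε)] with i hi hni x
    rw [iterate_succ_apply', iterate_succ_apply']
    calc dist (T₀ (T₀^[n] x)) (T i ((T i)^[n] x))
        ≤ dist (T₀ (T₀^[n] x)) (T₀ ((T i)^[n] x)) +
            dist (T₀ ((T i)^[n] x)) (T i ((T i)^[n] x)) := dist_triangle ..
      _ < ε / 2 + ε / 2 := add_lt_add (hni x) (hi _)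
      _ = ε := add_halves ε

lemma eventually_dist_iterate_lt {ι X : Type*} [PseudoMetricSpace X] {l : Filter ι}
    {T : ι → X → X} {T₀ : X → X} (hT : TendstoUniformly T T₀ l) (hT₀ : UniformContinuous T₀)
    (m : ℕ) {ε : ℝ} (hε : 0 < ε) :
    ∀ᶠ i in l, ∀ k ≤ m, ∀ x, dist (T₀^[k] x) ((T i)^[k] x) < ε := by
  have := (Finset.eventually_all (Finset.range (m + 1))).2 fun k _ =>
    Metric.tendstoUniformly_iff.1 (tendstoUniformly_iterate hT hT₀ k) ε hε
  simpa only [Finset.mem_range_succ_iff] using this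

lemma eventually_exists_continuation {ι X : Type*} [MetricSpace X] {A : ℝ≥0} {r : ℝ}
    {l : Filter ι} {T : ι → X → X} {T₀ : X → X} (hT : TendstoUniformly T T₀ l)
    (hexp : ∀ᶠ i in l, IsExpandingWith A r (T i)) (hT₀ : UniformContinuous T₀) {p : ℕ} {Q : X}
    (hp : 0 < p) (hQ : IsPeriodicPt T₀ p Q) {τ : ℝ} (hτ : 0 < τ) :
    ∀ᶠ i in l, ∃ y, IsPeriodicPt (T i) p y ∧ ∀ k, dist ((T i)^[k] y) (T₀^[k] Q) ≤ τ := by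
  obtain ⟨η, hη, hητ⟩ := exists_pos_mul_lt hτ (1 + A)
  filter_upwards [eventually_dist_iterate_lt hT hT₀ p hη, hexp] with i hdist hTi
  obtain ⟨y, hy, hsum⟩ := hTi.close Q p hp
  have hreturn := hdist p le_rfl Q
  rw [hQ.eq, dist_comm] at hreturn
  refine ⟨y, hy, fun k => ?_⟩
  have hk := (k.mod_lt hp).le
  rw [← hy.iterate_mod_apply, ← hQ.iterate_mod_apply]
  have hyQ := dist_iterate_le_of_sum_le hsum hk
  have hA : A * dist ((T i)^[p] Q) Q ≤ A * η := by gcongr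
  have hclose := hdist _ hk Q
  rw [dist_comm] at hclose
  linarith [dist_triangle ((T i)^[k % p] y) ((T i)^[k % p] Q) (T₀^[k % p] Q)]

/-- The pairs `(T i, φ i)`, with nonpositive periodic sums, converge to `(T₀, φ₀)` along `l`,
with uniform expansion and Lipschitz constants. Only an upper bound on the limit behaviour of
`φ i` is required: for `φ i = f i - β(f i, T i)` this follows from lower semicontinuity of `β`. -/
structure IsPerturbation {ι X : Type*} [MetricSpace X] (A : ℝ≥0) (r : ℝ) (T : ι → X → X)
    (φ : ι → X → ℝ) (T₀ : X → X) (φ₀ : X → ℝ) (l : Filter ι) : Prop where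
  expanding₀ : IsExpandingWith A r T₀
  lipschitz₀ : LipschitzWith A φ₀
  expanding : ∀ᶠ i in l, IsExpandingWith A r (T i)
  lipschitz : ∀ᶠ i in l, LipschitzWith A (φ i)
  nonpos : ∀ᶠ i in l, NonposOnPeriodic (T i) (φ i)
  tendsto : TendstoUniformly T T₀ l
  upper : ∀ δ > 0, ∀ᶠ i in l, ∀ x, φ i x ≤ φ₀ x + δ

namespace IsPerturbation

variable {ι X : Type*} [MetricSpace X] {A : ℝ≥0} {r c : ℝ} {T : ι → X → X} {φ : ι → X → ℝ}
  {T₀ : X → X} {φ₀ : X → ℝ} {l : Filter ι} {p : ℕ} {Q : X}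

lemma eventually_birkhoffSum_le (h : IsPerturbation A r T φ T₀ φ₀ l) (m : ℕ) {ε : ℝ}
    (hε : 0 < ε) :
    ∀ᶠ i in l, ∀ x, birkhoffSum (T i) (φ i) m x ≤ birkhoffSum T₀ φ₀ m x + ε := by
  induction m generalizing ε with
  | zero => simp [hε.le]
  | succ m ih =>
    have hm := Metric.tendstoUniformly_iff.1 (h.lipschitz₀.uniformContinuous.comp_tendstoUniformly
      (tendstoUniformly_iterate h.tendsto h.expanding₀.lipschitz.uniformContinuous m))
    filter_upwards [ih (half_pos hε), h.upper (ε / 4) (by positivity), hm (ε / 4) (by positivity)]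
      with i hsum hup hdist x
    rw [birkhoffSum_succ, birkhoffSum_succ]
    have hd : |φ₀ (T₀^[m] x) - φ₀ ((T i)^[m] x)| < ε / 4 := hdist x
    linarith [hsum x, hup ((T i)^[m] x), (abs_lt.1 hd).1]

lemma eventually_exists_close (h : IsPerturbation A r T φ T₀ φ₀ l) {m : ℕ} (hm : 0 < m) {ε : ℝ}
    (hε : 0 < ε) :
    ∀ᶠ i in l, ∀ x, ∃ w, IsPeriodicPt T₀ m w ∧
      (∀ k ≤ m, dist ((T i)^[k] x) (T₀^[k] w) ≤ A * dist ((T i)^[m] x) x + ε) ∧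
      birkhoffSum (T i) (φ i) m x ≤
        birkhoffSum T₀ φ₀ m w + A ^ 2 * dist ((T i)^[m] x) x + ε := by
  obtain ⟨η, hη, hηε⟩ := exists_pos_mul_lt (half_pos hε) (1 + A + A ^ 2)
  have hT₀ : UniformContinuous T₀ := h.expanding₀.lipschitz.uniformContinuous
  filter_upwards [eventually_dist_iterate_lt h.tendsto hT₀ m hη,
    h.eventually_birkhoffSum_le m (half_pos hε)] with i hdist hsum x
  obtain ⟨w, hw, hwx, hwsum⟩ := h.expanding₀.exists_close h.lipschitz₀ x hm
  have hreturn : dist (T₀^[m] x) x ≤ dist ((T i)^[m] x) x + η := by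
    linarith [dist_triangle (T₀^[m] x) ((T i)^[m] x) x, hdist m le_rfl x]
  have hA : A * dist (T₀^[m] x) x ≤ A * (dist ((T i)^[m] x) x + η) := by gcongr
  have hA2 : A ^ 2 * dist (T₀^[m] x) x ≤ A ^ 2 * (dist ((T i)^[m] x) x + η) := by gcongr
  have hAη : 0 ≤ A * η := by positivity
  have hA2η : 0 ≤ A ^ 2 * η := by positivity
  refine ⟨w, hw, fun k hk => ?_, ?_⟩
  · have := hdist k hk x
    rw [dist_comm] at this
    linarith [dist_triangle ((T i)^[k] x) (T₀^[k] x) (T₀^[k] w), hwx k hk,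
      dist_comm (T₀^[k] x) (T₀^[k] w)]
  · linarith [hsum x, (abs_le.1 hwsum).1]

/-- Closing such a segment for `T₀` gives a periodic orbit with almost maximal sum, that is, the
orbit of `Q`. -/
lemma exists_nearly_closed_follows (h : IsPerturbation A r T φ T₀ φ₀ l) (hc : 0 < c)
    (hQ : IsIsolatedOrbit T₀ φ₀ c Q) {τ : ℝ} (hτ : 0 < τ) :
    ∃ e > 0, ∀ L : ℕ, ∃ d > 0, ∀ᶠ i in l, ∀ n y, 0 < n → IsPeriodicPt (T i) n y →
      -d < birkhoffSum (T i) (φ i) n y → ∀ m, 0 < m → m ≤ L → dist ((T i)^[m] y) y < e →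
      ∃ a, IsPeriodicPt T₀ m (T₀^[a] Q) ∧ ∀ k ≤ m, dist ((T i)^[k] y) (T₀^[a + k] Q) ≤ τ := by
  obtain ⟨e₁, he₁, hec⟩ := exists_pos_mul_lt (div_pos hc three_pos) (2 * A ^ 2)
  obtain ⟨e₂, he₂, heτ⟩ := exists_pos_mul_lt (half_pos hτ) A
  refine ⟨min e₁ e₂, lt_min he₁ he₂, fun L => ?_⟩
  obtain ⟨d, hd, hdc⟩ := exists_pos_mul_lt (div_pos hc three_pos) L
  have hclose := (Finset.eventually_all (Finset.Ioc 0 L)).2 fun m hm =>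
    h.eventually_exists_close (Finset.mem_Ioc.1 hm).1 (lt_min (half_pos hτ) (div_pos hc three_pos))
  refine ⟨d, hd, ?_⟩
  filter_upwards [hclose, h.expanding, h.lipschitz, h.nonpos]
    with i hclose hT hφ hneg n y hn hy hsum m hm hmL hreturn
  obtain ⟨w, hw, hwy, hwsum⟩ := hclose m (Finset.mem_Ioc.2 ⟨hm, hmL⟩) y
  have hε₁ := min_le_left (τ / 2) (c / 3)
  have hε₂ := min_le_right (τ / 2) (c / 3)
  obtain ⟨a, rfl⟩ := hQ hm hw <| by
    have hturns := hT.mul_birkhoffSum_le hφ hneg hn hy m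
    have hA2 : A ^ 2 * dist ((T i)^[m] y) y ≤ A ^ 2 * e₁ := by
      gcongr
      exact (hreturn.trans_le (min_le_left ..)).le
    have hmd : -(L * d) ≤ m * birkhoffSum (T i) (φ i) n y := by
      have : (m : ℝ) * d ≤ L * d := by gcongr
      nlinarith [m.cast_nonneg (α := ℝ)]
    linarith
  refine ⟨a, hw, fun k hk => ?_⟩
  have hA : A * dist ((T i)^[m] y) y ≤ A * e₂ := by
    gcongr
    exact (hreturn.trans_le (min_le_right ..)).le
  rw [add_comm, iterate_add_apply]
  linarith [hwy k hk]

variable [CompactSpace X]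

lemma exists_return_near (h : IsPerturbation A r T φ T₀ φ₀ l) (hc : 0 < c)
    (hQ : IsIsolatedOrbit T₀ φ₀ c Q) (hp : 0 < p) (hper : IsPeriodicPt T₀ p Q) {τ : ℝ}
    (hτ : 0 < τ) :
    ∃ M : ℕ, ∃ d > 0, ∀ᶠ i in l, ∀ n y, 0 < n → IsPeriodicPt (T i) n y →
      -d < birkhoffSum (T i) (φ i) n y → ∃ k ≤ M, dist ((T i)^[k] y) Q ≤ τ := by
  obtain ⟨e, he, hfollow⟩ := h.exists_nearly_closed_follows hc hQ hτ
  obtain ⟨N, hN⟩ := exists_pigeonhole (X := X) he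
  obtain ⟨d, hd, hev⟩ := hfollow N
  refine ⟨N, d, hd, hev.mono fun i hi n y hn hy hsum => ?_⟩
  obtain ⟨j, j', hjj', hj', hdist⟩ := hN fun j => (T i)^[j] y
  obtain ⟨m, hm, rfl⟩ : ∃ m, 0 < m ∧ j' = m + j := ⟨j' - j, by omega, by omega⟩
  rw [dist_comm, iterate_add_apply] at hdist
  obtain ⟨a, ha, hfol⟩ := hi n _ hn (hy.apply_iterate j)
    (by rwa [birkhoffSum_iterate_of_isPeriodicPt hy]) m hm (by omega) hdist
  obtain ⟨b, hb⟩ := exists_iterate_eq_of_isPeriodicPt hp hper a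
  have hbm := b.mod_lt hm
  refine ⟨b % m + j, by omega, ?_⟩
  have := hfol (b % m) hbm.le
  rwa [add_comm a, iterate_add_apply _ _ a, ha.iterate_mod_apply, hb, ← iterate_add_apply] at this

/-- `y` lies on an orbit segment of bounded length between two visits close to `Q`. -/
lemma exists_near_orbit (h : IsPerturbation A r T φ T₀ φ₀ l) (hc : 0 < c)
    (hQ : IsIsolatedOrbit T₀ φ₀ c Q) (hp : 0 < p) (hper : IsPeriodicPt T₀ p Q) {τ : ℝ}
    (hτ : 0 < τ) :
    ∃ d > 0, ∀ᶠ i in l, ∀ n y, 0 < n → IsPeriodicPt (T i) n y →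
      -d < birkhoffSum (T i) (φ i) n y → ∃ a, dist y (T₀^[a] Q) ≤ τ := by
  obtain ⟨e, he, hfollow⟩ := h.exists_nearly_closed_follows hc hQ hτ
  obtain ⟨M, d₁, hd₁, hreturn⟩ := h.exists_return_near hc hQ hp hper (div_pos he three_pos)
  obtain ⟨d₂, hd₂, hfollow⟩ := hfollow (2 * M + 1)
  refine ⟨min d₁ d₂, lt_min hd₁ hd₂, ?_⟩
  filter_upwards [hreturn, hfollow] with i hreturn hfollow n y hn hy hsum
  have hsum₁ : -d₁ < birkhoffSum (T i) (φ i) n y := by linarith [min_le_left d₁ d₂]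
  have hsum₂ : -d₂ < birkhoffSum (T i) (φ i) n y := by linarith [min_le_right d₁ d₂]
  set z := (T i)^[(M + 1) * (n - 1)] y
  have hz : IsPeriodicPt (T i) n z := hy.apply_iterate _
  have hzy : (T i)^[M + 1] z = y := by
    rw [← iterate_add_apply, add_comm, ← Nat.mul_succ, Nat.succ_eq_add_one, Nat.sub_add_cancel hn]
    exact hy.const_mul _
  obtain ⟨k₁, hk₁, hnear₁⟩ := hreturn n z hn hz (by rwa [birkhoffSum_iterate_of_isPeriodicPt hy])
  obtain ⟨k₂, hk₂, hnear₂⟩ := hreturn n y hn hy hsum₁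
  have hpass : (T i)^[M + 1 - k₁] ((T i)^[k₁] z) = y := by
    rw [← iterate_add_apply, Nat.sub_add_cancel (by omega), hzy]
  obtain ⟨a, -, ha⟩ := hfollow n _ hn (hz.apply_iterate k₁)
    (by rwa [birkhoffSum_iterate_of_isPeriodicPt hz, birkhoffSum_iterate_of_isPeriodicPt hy])
    (k₂ + (M + 1 - k₁)) (by omega) (by omega) (by
      rw [iterate_add_apply, hpass]
      linarith [dist_triangle_right ((T i)^[k₂] y) ((T i)^[k₁] z) Q])
  have := ha (M + 1 - k₁) (by omega)
  rw [hpass] at this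
  exact ⟨_, this⟩

theorem exists_eventually_isIsolatedOrbit (h : IsPerturbation A r T φ T₀ φ₀ l) (hc : 0 < c)
    (hQ : IsIsolatedOrbit T₀ φ₀ c Q) (hp : 0 < p) (hper : IsPeriodicPt T₀ p Q) :
    ∃ d > 0, ∀ᶠ i in l, ∃ y₀, IsPeriodicPt (T i) p y₀ ∧ IsIsolatedOrbit (T i) (φ i) d y₀ := by
  obtain ⟨s, hs, hsep⟩ := exists_orbit_separation hp hper
  obtain ⟨e, he, hes⟩ := exists_pos_mul_lt hs (2 + A)
  have hr := h.expanding₀.r_pos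
  set δ := min e (r / 2)
  have hδ : 0 < δ := lt_min he (half_pos hr)
  have hδe : δ ≤ e := min_le_left ..
  have hδr : δ ≤ r / 2 := min_le_right ..
  have hAδ : A * δ ≤ A * e := by gcongr
  obtain ⟨d, hd, hnear⟩ := h.exists_near_orbit hc hQ hp hper hδ
  refine ⟨d, hd, ?_⟩
  filter_upwards [hnear, eventually_exists_continuation h.tendsto h.expanding
    h.expanding₀.lipschitz.uniformContinuous hp hper hδ, h.expanding,
    Metric.tendstoUniformly_iff.1 h.tendsto δ hδ] with i hnear ⟨y₀, hy₀, hshadow⟩ hT hdist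
  refine ⟨y₀, hy₀, fun n y hn hy hsum => ?_⟩
  refine exists_iterate_eq_of_near_orbit (δ := δ) (η := δ) (κ := δ) hT h.expanding₀.lipschitz hsep
    (by linarith) (by linarith) (fun x => (dist_comm _ _).trans_le (hdist x).le) hshadow
    fun k => hnear n _ hn (hy.apply_iterate k) ?_
  rwa [birkhoffSum_iterate_of_isPeriodicPt hy]

end IsPerturbation

/-! ### Maximal ergodic averages -/

lemma exists_invariant_measure_of_isPeriodicPt {X : Type*} [MeasurableSpace X]
    [MeasurableSingletonClass X] {T : X → X} (hT : Measurable T) {n : ℕ} (hn : 0 < n) {y : X}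
    (hy : IsPeriodicPt T n y) :
    ∃ μ : Measure X, IsProbabilityMeasure μ ∧ μ.map T = μ ∧
      ∀ f : X → ℝ, ∫ x, f x ∂μ = (n : ℝ)⁻¹ * birkhoffSum T f n y := by
  refine ⟨(n : ENNReal)⁻¹ • ∑ i ∈ Finset.range n, Measure.dirac (T^[i] y), ⟨?_⟩, ?_, fun f => ?_⟩
  · simp [ENNReal.inv_mul_cancel (Nat.cast_ne_zero.2 hn.ne') (ENNReal.natCast_ne_top n)]
  · rw [Measure.map_smul, Measure.map_finset_sum hT.aemeasurable]
    simp_rw [Measure.map_dirac' hT, ← iterate_succ_apply' T]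
    obtain ⟨m, rfl⟩ := Nat.exists_eq_succ_of_ne_zero hn.ne'
    rw [Finset.sum_range_succ, hy.eq, Finset.sum_range_succ' (fun i => Measure.dirac (T^[i] y)),
      iterate_zero_apply]
  · rw [integral_smul_measure, integral_finsetSum_measure fun _ _ => integrable_dirac (by simp)]
    simp [birkhoffSum]

section Beta

variable {A : ℝ≥0} {r : ℝ} {T : Circle1 → Circle1} {f : Circle1 → ℝ}

lemma integrable_of_continuous (hf : Continuous f) (μ : Measure Circle1) [IsFiniteMeasure μ] :
    Integrable f μ :=
  hf.integrable_of_hasCompactSupport (HasCompactSupport.of_compactSpace f)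

lemma integral_le_beta (hf : Continuous f) {μ : Measure Circle1} (hμ : InvProb T μ) :
    ∫ x, f x ∂μ ≤ beta f T := by
  obtain ⟨C, hC⟩ := isCompact_univ.exists_bound_of_continuousOn hf.continuousOn
  refine le_csSup ⟨C, ?_⟩ ⟨μ, hμ, rfl⟩
  rintro _ ⟨ν, hν, rfl⟩
  have := hν.1
  simpa using integral_mono (integrable_of_continuous hf ν) (integrable_const C)
    fun x => (le_abs_self _).trans (hC x trivial)

lemma birkhoffSum_sub_const {X : Type*} (T : X → X) (f : X → ℝ) (b : ℝ) (n : ℕ) (x : X) :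
    birkhoffSum T (fun x => f x - b) n x = birkhoffSum T f n x - n * b := by
  simp only [birkhoffSum, Finset.sum_sub_distrib, Finset.sum_const, Finset.card_range,
    nsmul_eq_mul]

lemma nonposOnPeriodic_sub_beta (hT : Continuous T) (hf : Continuous f) :
    NonposOnPeriodic T (fun x => f x - beta f T) := by
  intro n y hy
  rcases n.eq_zero_or_pos with rfl | hn
  · simp
  obtain ⟨μ, hμ, hTμ, hint⟩ := exists_invariant_measure_of_isPeriodicPt hT.measurable hn hy
  have hle := integral_le_beta hf ⟨hμ, hTμ⟩
  rw [hint, inv_mul_le_iff₀ (by exact_mod_cast hn)] at hle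
  rw [birkhoffSum_sub_const]
  linarith

lemma lipschitzWith_sub_const (hf : LipschitzWith A f) (b : ℝ) :
    LipschitzWith A fun x => f x - b :=
  .of_dist_le_mul fun x y => by simpa using hf.dist_le_mul x y

lemma exists_isPeriodicPt_neg_lt_birkhoffSum (hT : IsExpandingWith A r T) (hf : LipschitzWith A f)
    {d : ℝ} (hd : 0 < d) :
    ∃ n y, 0 < n ∧ IsPeriodicPt T n y ∧ -d < birkhoffSum T (fun x => f x - beta f T) n y := by
  by_contra! hcon
  obtain ⟨c, hc, hsum⟩ := hT.exists_forall_birkhoffSum_le (lipschitzWith_sub_const hf (beta f T))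
    hd hcon
  have hT' := hT.lipschitz.continuous
  have hle : beta f T ≤ beta f T - c := by
    refine csSup_le ?_ ?_
    · obtain ⟨w, hw, -⟩ := hT.close 0 1 one_pos
      obtain ⟨μ, hμ, hTμ, -⟩ := exists_invariant_measure_of_isPeriodicPt hT'.measurable one_pos hw
      exact ⟨_, μ, ⟨hμ, hTμ⟩, rfl⟩
    · rintro _ ⟨μ, ⟨hμ, hTμ⟩, rfl⟩
      have hint := integrable_of_continuous hf.continuous μ
      have hle : ∫ x, (f x - beta f T) ∂μ ≤ -c :=
        integral_le_neg_of_birkhoffSum_le ⟨hT'.measurable, hTμ⟩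
          (hint.sub (integrable_const (beta f T))) hsum
      rw [integral_sub hint (integrable_const _), integral_const, probReal_univ, one_smul] at hle
      change ∫ x, f x ∂μ ≤ beta f T - c
      linarith
  linarith

end Beta

section Stability

variable {ι : Type*} {l : Filter ι} {A : ℝ≥0} {r : ℝ} {T : ι → Circle1 → Circle1}
  {f : ι → Circle1 → ℝ} {T₀ : Circle1 → Circle1} {f₀ : Circle1 → ℝ}

lemma eventually_beta_sub_le (hT₀ : IsExpandingWith A r T₀) (hf₀ : LipschitzWith A f₀)
    (hexp : ∀ᶠ i in l, IsExpandingWith A r (T i)) (hcont : ∀ᶠ i in l, Continuous (f i))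
    (hT : TendstoUniformly T T₀ l) (hf : TendstoUniformly f f₀ l) {δ : ℝ} (hδ : 0 < δ) :
    ∀ᶠ i in l, beta f₀ T₀ - δ ≤ beta (f i) (T i) := by
  obtain ⟨n, y, hn, hy, hsum⟩ := exists_isPeriodicPt_neg_lt_birkhoffSum hT₀ hf₀ (half_pos hδ)
  obtain ⟨τ, hτ, hτδ⟩ := exists_pos_mul_lt (div_pos hδ four_pos) A
  have hn' : (1 : ℝ) ≤ n := by exact_mod_cast hn
  filter_upwards [eventually_exists_continuation hT hexp hT₀.lipschitz.uniformContinuous hn hy hτ,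
    Metric.tendstoUniformly_iff.1 hf _ (div_pos hδ four_pos), hexp, hcont]
    with i ⟨z, hz, hzy⟩ hfi hTi hfc
  have hpoint (k : ℕ) : f₀ (T₀^[k] y) - δ / 2 ≤ f i ((T i)^[k] z) := by
    have h₁ : |f₀ ((T i)^[k] z) - f₀ (T₀^[k] y)| ≤ A * τ :=
      (hf₀.dist_le_mul _ _).trans (by gcongr; exact hzy k)
    have h₂ : |f₀ ((T i)^[k] z) - f i ((T i)^[k] z)| < δ / 4 := hfi _
    linarith [(abs_le.1 h₁).1, (abs_lt.1 h₂).2]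
  have hcompare : birkhoffSum T₀ f₀ n y - n * (δ / 2) ≤ birkhoffSum (T i) (f i) n z := by
    rw [← birkhoffSum_sub_const]
    exact Finset.sum_le_sum fun k _ => hpoint k
  have hz' := nonposOnPeriodic_sub_beta hTi.lipschitz.continuous hfc hz
  rw [birkhoffSum_sub_const] at hsum hz'
  have : (n : ℝ) * (beta f₀ T₀ - δ) ≤ n * beta (f i) (T i) := by nlinarith
  exact le_of_mul_le_mul_left this (by linarith)

lemma isPerturbation_sub_beta (hT₀ : IsExpandingWith A r T₀) (hf₀ : LipschitzWith A f₀)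
    (hexp : ∀ᶠ i in l, IsExpandingWith A r (T i)) (hlip : ∀ᶠ i in l, LipschitzWith A (f i))
    (hT : TendstoUniformly T T₀ l) (hf : TendstoUniformly f f₀ l) :
    IsPerturbation A r T (fun i x => f i x - beta (f i) (T i)) T₀
      (fun x => f₀ x - beta f₀ T₀) l where
  expanding₀ := hT₀
  lipschitz₀ := lipschitzWith_sub_const hf₀ _
  expanding := hexp
  lipschitz := hlip.mono fun _ h => lipschitzWith_sub_const h _
  nonpos := by
    filter_upwards [hexp, hlip] with i hTi hfi
    exact nonposOnPeriodic_sub_beta hTi.lipschitz.continuous hfi.continuous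
  tendsto := hT
  upper δ hδ := by
    filter_upwards [Metric.tendstoUniformly_iff.1 hf _ (half_pos hδ), eventually_beta_sub_le hT₀ hf₀
      hexp (hlip.mono fun _ h => h.continuous) hT hf (half_pos hδ)] with i hfi hβ x
    have : |f₀ x - f i x| < δ / 2 := hfi x
    linarith [(abs_lt.1 this).1]

theorem eventually_isPeriodicOrbit_omegaSet (hT₀ : IsExpandingWith A r T₀)
    (hf₀ : LipschitzWith A f₀) (hexp : ∀ᶠ i in l, IsExpandingWith A r (T i))
    (hlip : ∀ᶠ i in l, LipschitzWith A (f i)) (hT : TendstoUniformly T T₀ l)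
    (hf : TendstoUniformly f f₀ l) (hΩ : IsPeriodicOrbit T₀ (OmegaSet f₀ T₀)) :
    ∀ᶠ i in l, IsPeriodicOrbit (T i) (OmegaSet (f i) (T i)) := by
  obtain ⟨Q, ⟨p, hp, hQ⟩, hΩ⟩ := hΩ
  have h := isPerturbation_sub_beta hT₀ hf₀ hexp hlip hT hf
  obtain ⟨c, hc, hiso⟩ := exists_isIsolatedOrbit hT₀ h.lipschitz₀
    (nonposOnPeriodic_sub_beta hT₀.lipschitz.continuous hf₀.continuous) hp hQ hΩ
  obtain ⟨d, hd, hev⟩ := h.exists_eventually_isIsolatedOrbit hc hiso hp hQ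
  filter_upwards [hev, hexp, hlip, h.nonpos] with i ⟨y, hy, hiso⟩ hTi hfi hneg
  exact ⟨y, ⟨p, hp, hy⟩, hiso.nonwanderingSet_eq hTi (lipschitzWith_sub_const hfi _) hd hneg
    (fun _ => exists_isPeriodicPt_neg_lt_birkhoffSum hTi hfi) hp hy⟩

end Stability

/-! ### Circle maps and their lifts -/

lemma coe_rep (z : Circle1) : ((rep z : ℝ) : Circle1) = z :=
  (AddCircle.equivIco 1 0).symm_apply_apply z

lemma exists_coe_eq (z : Circle1) : ∃ x : ℝ, (x : Circle1) = z :=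
  ⟨rep z, coe_rep z⟩

lemma coe_add_int (x : ℝ) (k : ℤ) : ((x + k : ℝ) : Circle1) = x := by
  rw [AddCircle.coe_add, add_eq_left]
  exact (AddCircle.coe_eq_zero_iff 1).2 ⟨k, by simp⟩

lemma lipschitzWith_coe : LipschitzWith 1 ((↑) : ℝ → Circle1) :=
  .of_dist_le_mul fun x y => by
    rw [dist_eq_norm, dist_eq_norm, ← AddCircle.coe_sub, NNReal.coe_one, one_mul]
    exact QuotientAddGroup.norm_mk_le_norm

lemma dist_coe_le (x y : ℝ) : dist (x : Circle1) y ≤ dist x y := by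
  simpa using lipschitzWith_coe.dist_le_mul x y

lemma exists_dist_coe_eq (x y : ℝ) : ∃ k : ℤ, dist (x : Circle1) y = dist x (y + k) :=
  ⟨round (x - y), by
    rw [dist_eq_norm, ← AddCircle.coe_sub, UnitAddCircle.norm_eq, Real.dist_eq,
      sub_add_eq_sub_sub]⟩

lemma dist_coe_eq_of_le_half {x y : ℝ} (h : dist x y ≤ 1 / 2) :
    dist (x : Circle1) y = dist x y := by
  rw [dist_eq_norm, ← AddCircle.coe_sub, Real.dist_eq]
  exact (AddCircle.norm_coe_eq_abs_iff 1 one_ne_zero).2 (by simpa [Real.dist_eq] using h)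

lemma lipschitzWith_of_comp_coe {Y : Type*} [PseudoMetricSpace Y] {K : ℝ≥0} {g : Circle1 → Y}
    (h : LipschitzWith K fun x : ℝ => g x) : LipschitzWith K g := by
  refine .of_dist_le_mul fun z w => ?_
  obtain ⟨x, rfl⟩ := exists_coe_eq z
  obtain ⟨y, rfl⟩ := exists_coe_eq w
  obtain ⟨k, hk⟩ := exists_dist_coe_eq x y
  rw [hk, ← coe_add_int y k]
  exact h.dist_le_mul x (y + k)

section Lift

variable {F : ℝ → ℝ} {c : ℝ} {d : ℤ}

lemma map_add_int_of_map_add_one (hF : ∀ x, F (x + 1) = F x + c) (x : ℝ) (k : ℤ) :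
    F (x + k) = F x + k * c := by
  simpa using AddConstMapClass.map_add_int' (⟨F, hF⟩ : AddConstMap ℝ ℝ 1 c) x k

lemma apply_rep_coe (hF : ∀ x, F (x + 1) = F x + c) (x : ℝ) :
    ∃ k : ℤ, F (rep x) = F x + k * c := by
  have h : rep (x : Circle1) = Int.fract (x / 1) * 1 := AddCircle.coe_equivIco_mk_apply 1 x
  refine ⟨-⌊x⌋, ?_⟩
  rw [← map_add_int_of_map_add_one hF, h, div_one, mul_one, Int.fract]
  push_cast
  ring_nf

lemma iterate_add_one (hF : ∀ x, F (x + 1) = F x + d) (n : ℕ) (x : ℝ) :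
    F^[n] (x + 1) = F^[n] x + (d : ℝ) ^ n := by
  induction n with
  | zero => simp
  | succ n ih =>
    have := map_add_int_of_map_add_one hF (F^[n] x) (d ^ n)
    push_cast at this
    rw [iterate_succ_apply', iterate_succ_apply', ih, this, pow_succ]

lemma semiconj_cmap (hF : ∀ x, F (x + 1) = F x + d) :
    Semiconj ((↑) : ℝ → Circle1) F (cmap F) := fun x => by
  obtain ⟨k, hk⟩ := apply_rep_coe hF x
  rw [cmap, hk]
  exact_mod_cast (coe_add_int (F x) (k * d)).symm

lemma iterate_cmap_coe (hF : ∀ x, F (x + 1) = F x + d) (n : ℕ) (x : ℝ) :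
    (cmap F)^[n] x = (F^[n] x : ℝ) :=
  ((semiconj_cmap hF).iterate_right n x).symm

lemma lipschitzWith_cmap {Λ : ℝ≥0} (hF : ∀ x, F (x + 1) = F x + d) (hΛ : LipschitzWith Λ F) :
    LipschitzWith Λ (cmap F) := by
  refine lipschitzWith_of_comp_coe ?_
  simp only [← (semiconj_cmap hF).eq]
  rw [← one_mul Λ]
  exact lipschitzWith_coe.comp hΛ

lemma surjective_of_map_add_one (hF : Continuous F) (hc : c ≠ 0)
    (hF₁ : ∀ x, F (x + 1) = F x + c) : Surjective F := by
  intro u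
  have hconn := (isPreconnected_range hF).ordConnected
  obtain ⟨n, hn⟩ := exists_nat_gt (|u - F 0| / |c|)
  rw [div_lt_iff₀ (abs_pos.2 hc)] at hn
  have hpos := map_add_int_of_map_add_one hF₁ 0 n
  have hneg := map_add_int_of_map_add_one hF₁ 0 (-n)
  push_cast at hpos hneg
  obtain ⟨hlower, hupper⟩ := abs_le.1 hn.le
  rcases hc.lt_or_gt with hc | hc
  · rw [abs_of_neg hc] at hlower hupper
    exact hconn.out ⟨_, hpos⟩ ⟨_, hneg⟩ ⟨by linarith, by linarith⟩
  · rw [abs_of_pos hc] at hlower hupper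
    exact hconn.out ⟨_, hneg⟩ ⟨_, hpos⟩ ⟨by linarith, by linarith⟩

/-- As long as the lifted orbits are `r`-close, their images are `1 / 2`-close, and at this
scale the projection to the circle is isometric. -/
lemma dist_iterate_le_of_dist_iterate_cmap_le (hF : ∀ x, F (x + 1) = F x + d)
    {Λ : ℝ≥0} {r : ℝ} (hΛ : LipschitzWith Λ F) (hr : Λ * r ≤ 1 / 2) {x y : ℝ} (hxy : dist x y ≤ r)
    (h : ∀ i, dist ((cmap F)^[i] (x : Circle1)) ((cmap F)^[i] (y : Circle1)) ≤ r) (i : ℕ) :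
    dist (F^[i] x) (F^[i] y) ≤ r := by
  induction i with
  | zero => exact hxy
  | succ i ih =>
    have hhalf : dist (F^[i + 1] x) (F^[i + 1] y) ≤ 1 / 2 := by
      rw [iterate_succ_apply', iterate_succ_apply']
      exact (hΛ.dist_le_mul _ _).trans ((mul_le_mul_of_nonneg_left ih Λ.2).trans hr)
    rw [← dist_coe_eq_of_le_half hhalf, ← iterate_cmap_coe hF, ← iterate_cmap_coe hF]
    exact h (i + 1)

end Lift

/-- `ρ` is an adapted metric for the lift `F`: it is invariant under integer translations,
comparable to the usual metric of `ℝ`, and expanded by the factor `θ⁻¹` under one application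
of `F`. -/
structure IsAdaptedMetric (F : ℝ → ℝ) (ρ : ℝ → ℝ → ℝ) (M : ℝ≥0) (θ : ℝ) : Prop where
  nonneg : 0 ≤ θ
  lt_one : θ < 1
  dist_le : ∀ x y, dist x y ≤ ρ x y
  le_mul_dist : ∀ x y, ρ x y ≤ M * dist x y
  triangle : ∀ x y z, ρ x z ≤ ρ x y + ρ y z
  add_int : ∀ x y (k : ℤ), ρ (x + k) (y + k) = ρ x y
  le_mul_map : ∀ x y, ρ x y ≤ θ * ρ (F x) (F y)

namespace IsAdaptedMetric

variable {F : ℝ → ℝ} {d : ℤ} {ρ : ℝ → ℝ → ℝ} {M Λ : ℝ≥0} {θ r : ℝ}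

lemma one_le (h : IsAdaptedMetric F ρ M θ) : 1 ≤ (M : ℝ) := by
  simpa using (h.dist_le 1 0).trans (h.le_mul_dist 1 0)

lemma le_mul_iterate (h : IsAdaptedMetric F ρ M θ) (n : ℕ) (x y : ℝ) :
    ρ x y ≤ θ ^ n * ρ (F^[n] x) (F^[n] y) := by
  induction n generalizing x y with
  | zero => simp
  | succ n ih =>
    rw [iterate_succ_apply, iterate_succ_apply, pow_succ', mul_assoc]
    exact (h.le_mul_map x y).trans (mul_le_mul_of_nonneg_left (ih _ _) h.nonneg)

lemma dist_le_mul_dist_iterate (h : IsAdaptedMetric F ρ M θ) (n : ℕ) (x y : ℝ) :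
    dist x y ≤ θ ^ n * (M * dist (F^[n] x) (F^[n] y)) :=
  (h.dist_le x y).trans <| (h.le_mul_iterate n x y).trans <|
    mul_le_mul_of_nonneg_left (h.le_mul_dist _ _) (pow_nonneg h.nonneg n)

lemma sum_dist_iterate_le (h : IsAdaptedMetric F ρ M θ) (n : ℕ) (x y : ℝ) :
    ∑ i ∈ Finset.range (n + 1), dist (F^[i] x) (F^[i] y) ≤
      M * (1 - θ)⁻¹ * dist (F^[n] x) (F^[n] y) := by
  set D := M * dist (F^[n] x) (F^[n] y)
  have hterm : ∀ i ∈ Finset.range (n + 1), dist (F^[i] x) (F^[i] y) ≤ θ ^ (n - i) * D := by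
    intro i hi
    have := h.dist_le_mul_dist_iterate (n - i) (F^[i] x) (F^[i] y)
    rwa [← iterate_add_apply, ← iterate_add_apply,
      Nat.sub_add_cancel (Finset.mem_range_succ_iff.1 hi)] at this
  have hgeom : ∑ i ∈ Finset.range (n + 1), θ ^ i ≤ (1 - θ)⁻¹ := by
    rw [← tsum_geometric_of_lt_one h.nonneg h.lt_one]
    exact (summable_geometric_of_lt_one h.nonneg h.lt_one).sum_le_tsum _
      fun i _ => pow_nonneg h.nonneg i
  calc ∑ i ∈ Finset.range (n + 1), dist (F^[i] x) (F^[i] y)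
      ≤ ∑ i ∈ Finset.range (n + 1), θ ^ (n - i) * D := Finset.sum_le_sum hterm
    _ = (∑ i ∈ Finset.range (n + 1), θ ^ i) * D := by
      rw [← Finset.sum_mul, Finset.sum_flip fun i => θ ^ i]
    _ ≤ (1 - θ)⁻¹ * D := by gcongr
    _ = M * (1 - θ)⁻¹ * dist (F^[n] x) (F^[n] y) := by ring

lemma sum_dist_iterate_cmap_le (h : IsAdaptedMetric F ρ M θ) (hF : ∀ x, F (x + 1) = F x + d)
    (n : ℕ) (x y : ℝ) :
    ∑ i ∈ Finset.range (n + 1), dist ((cmap F)^[i] (x : Circle1)) ((cmap F)^[i] (y : Circle1)) ≤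
      M * (1 - θ)⁻¹ * dist (F^[n] x) (F^[n] y) := by
  refine (Finset.sum_le_sum fun i _ => ?_).trans (h.sum_dist_iterate_le n x y)
  rw [iterate_cmap_coe hF, iterate_cmap_coe hF]
  exact dist_coe_le _ _

/-- If `|d| ≤ 1`, then `0` and `1` would stay at distance at most `1` under iteration. -/
lemma one_lt_abs_degree (h : IsAdaptedMetric F ρ M θ) (hF : ∀ x, F (x + 1) = F x + d) :
    1 < |(d : ℝ)| := by
  by_contra! hd
  have hM := h.one_le
  obtain ⟨n, hn⟩ := exists_pow_lt_of_lt_one (show (0 : ℝ) < (M : ℝ)⁻¹ by positivity) h.lt_one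
  have hdist := h.dist_le_mul_dist_iterate n (0 + 1) 0
  rw [iterate_add_one hF, dist_self_add_left, dist_self_add_left, norm_one, norm_pow,
    Real.norm_eq_abs] at hdist
  have : θ ^ n * (M * |(d : ℝ)| ^ n) < 1 := calc
    θ ^ n * (M * |(d : ℝ)| ^ n) ≤ θ ^ n * (M * 1) := by
      have := h.nonneg
      gcongr
      exact pow_le_one₀ (abs_nonneg _) hd
    _ < (M : ℝ)⁻¹ * (M * 1) := by gcongr
    _ = 1 := by field_simp
  linarith

lemma degree_pow_ne_one (h : IsAdaptedMetric F ρ M θ) (hF : ∀ x, F (x + 1) = F x + d) {n : ℕ}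
    (hn : 0 < n) : (d : ℝ) ^ n ≠ 1 := fun hd => by
  have := one_lt_pow₀ (h.one_lt_abs_degree hF) hn.ne'
  rw [← abs_pow, hd, abs_one] at this
  exact this.false

lemma exists_pull (h : IsAdaptedMetric F ρ M θ) (hcont : Continuous F)
    (hF : ∀ x, F (x + 1) = F x + d) (x : Circle1) (n : ℕ) (u : Circle1) :
    ∃ w, (cmap F)^[n] w = u ∧
      ∑ i ∈ Finset.range (n + 1), dist ((cmap F)^[i] w) ((cmap F)^[i] x) ≤
        M * (1 - θ)⁻¹ * dist u ((cmap F)^[n] x) := by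
  obtain ⟨x, rfl⟩ := exists_coe_eq x
  obtain ⟨u, rfl⟩ := exists_coe_eq u
  have hd : (d : ℝ) ≠ 0 := abs_pos.1 (one_pos.trans (h.one_lt_abs_degree hF))
  rw [iterate_cmap_coe hF n x, dist_comm]
  obtain ⟨k, hk⟩ := exists_dist_coe_eq (F^[n] x) u
  obtain ⟨w, hw⟩ := surjective_of_map_add_one (hcont.iterate n) (pow_ne_zero n hd)
    (iterate_add_one hF n) (u + k)
  refine ⟨w, by rw [iterate_cmap_coe hF, hw, coe_add_int], ?_⟩
  rw [hk, ← hw, dist_comm (F^[n] x)]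
  exact h.sum_dist_iterate_cmap_le hF n w x

lemma dist_le_of_iterate_eq_add (h : IsAdaptedMetric F ρ M θ) {n : ℕ} (hn : 0 < n) {w : ℝ}
    {k : ℤ} (hw : F^[n] w = w + k) (x : ℝ) :
    dist x w ≤ M * (1 - θ)⁻¹ * dist (F^[n] x) (x + k) := by
  have hθ : 0 < 1 - θ := sub_pos.2 h.lt_one
  have hρ : 0 ≤ ρ (F^[n] x) (F^[n] w) := dist_nonneg.trans (h.dist_le _ _)
  have hrec : ρ x w ≤ θ * (ρ (F^[n] x) (x + k) + ρ x w) := calc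
    ρ x w ≤ θ ^ n * ρ (F^[n] x) (F^[n] w) := h.le_mul_iterate n x w
    _ ≤ θ * ρ (F^[n] x) (F^[n] w) := by
      gcongr
      exact pow_le_of_le_one h.nonneg h.lt_one.le hn.ne'
    _ ≤ θ * (ρ (F^[n] x) (x + k) + ρ x w) := by
      have := h.triangle (F^[n] x) (x + k) (w + k)
      rw [h.add_int, ← hw] at this
      exact mul_le_mul_of_nonneg_left this h.nonneg
  have hmul : (1 - θ) * ρ x w ≤ M * dist (F^[n] x) (x + k) := calc
    (1 - θ) * ρ x w ≤ θ * ρ (F^[n] x) (x + k) := by linarith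
    _ ≤ 1 * ρ (F^[n] x) (x + k) :=
      mul_le_mul_of_nonneg_right h.lt_one.le (dist_nonneg.trans (h.dist_le _ _))
    _ ≤ M * dist (F^[n] x) (x + k) := by simpa using h.le_mul_dist _ _
  calc dist x w ≤ ρ x w := h.dist_le x w
    _ ≤ (1 - θ)⁻¹ * (M * dist (F^[n] x) (x + k)) := by rwa [le_inv_mul_iff₀ hθ]
    _ = M * (1 - θ)⁻¹ * dist (F^[n] x) (x + k) := by ring

lemma exists_close (h : IsAdaptedMetric F ρ M θ) (hcont : Continuous F)
    (hF : ∀ x, F (x + 1) = F x + d) (x : Circle1) {n : ℕ} (hn : 0 < n) :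
    ∃ w, IsPeriodicPt (cmap F) n w ∧
      ∑ i ∈ Finset.range (n + 1), dist ((cmap F)^[i] w) ((cmap F)^[i] x) ≤
        M * (1 - θ)⁻¹ * (M * (1 - θ)⁻¹ + 1) * dist ((cmap F)^[n] x) x := by
  obtain ⟨x, rfl⟩ := exists_coe_eq x
  have hθ : 0 < 1 - θ := sub_pos.2 h.lt_one
  rw [iterate_cmap_coe hF n x]
  obtain ⟨k, hk⟩ := exists_dist_coe_eq (F^[n] x) x
  -- A solution of `Fⁿ w = w + k` projects to a fixed point of the `n`-th iterate on the circle.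
  obtain ⟨w, hw⟩ := surjective_of_map_add_one (F := fun u => F^[n] u - u)
    ((hcont.iterate n).sub continuous_id) (sub_ne_zero.2 (h.degree_pow_ne_one hF hn))
    (fun u => by rw [iterate_add_one hF]; ring) k
  have hw : F^[n] w = w + k := by linarith
  refine ⟨w, by rw [IsPeriodicPt, IsFixedPt, iterate_cmap_coe hF, hw, coe_add_int], ?_⟩
  have hend : dist (F^[n] w) (F^[n] x) ≤ (M * (1 - θ)⁻¹ + 1) * dist (F^[n] x) (x + k) := calc
    dist (F^[n] w) (F^[n] x) ≤ dist (F^[n] w) (x + k) + dist (x + k) (F^[n] x) :=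
      dist_triangle _ _ _
    _ = dist x w + dist (F^[n] x) (x + k) := by
      rw [hw, dist_add_right, dist_comm w, dist_comm (x + (k : ℝ))]
    _ ≤ _ := by linarith [h.dist_le_of_iterate_eq_add hn hw x]
  rw [hk, mul_assoc]
  exact (h.sum_dist_iterate_cmap_le hF n w x).trans (by gcongr)

lemma eq_of_forall_dist_iterate_le (h : IsAdaptedMetric F ρ M θ)
    (hF : ∀ x, F (x + 1) = F x + d) (hΛ : LipschitzWith Λ F) (hr : Λ * r ≤ 1 / 2)
    {x y : Circle1} (hxy : ∀ i, dist ((cmap F)^[i] x) ((cmap F)^[i] y) ≤ r) : x = y := by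
  obtain ⟨x, rfl⟩ := exists_coe_eq x
  obtain ⟨y, rfl⟩ := exists_coe_eq y
  obtain ⟨k, hk⟩ := exists_dist_coe_eq x y
  have h₀ : dist x (y + k) ≤ r := hk ▸ hxy 0
  rw [← coe_add_int y k] at hxy ⊢
  have hlim : Tendsto (fun n : ℕ => θ ^ n * (M * r)) atTop (𝓝 0) := by
    simpa using (tendsto_pow_atTop_nhds_zero_of_lt_one h.nonneg h.lt_one).mul_const (M * r)
  have hdist : dist x (y + k) ≤ 0 := ge_of_tendsto' hlim fun n => by
    have := h.nonneg
    refine (h.dist_le_mul_dist_iterate n x (y + k)).trans ?_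
    gcongr
    exact dist_iterate_le_of_dist_iterate_cmap_le hF hΛ hr h₀ hxy n
  rw [dist_le_zero.1 hdist]

theorem isExpandingWith (h : IsAdaptedMetric F ρ M θ)
    (hF : ∀ x, F (x + 1) = F x + d) (hΛ : LipschitzWith Λ F) {A : ℝ≥0} (hΛA : Λ ≤ A)
    (hA : M * (1 - θ)⁻¹ * (M * (1 - θ)⁻¹ + 1) ≤ A) (hr₀ : 0 < r) (hr : Λ * r ≤ 1 / 2) :
    IsExpandingWith A r (cmap F) := by
  have hB : 1 ≤ M * (1 - θ)⁻¹ :=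
    one_le_mul_of_one_le_of_one_le h.one_le
      ((one_le_inv₀ (sub_pos.2 h.lt_one)).2 (by linarith [h.nonneg]))
  have hBA : M * (1 - θ)⁻¹ ≤ A := by nlinarith
  refine ⟨by exact_mod_cast hB.trans hBA, hr₀, (lipschitzWith_cmap hF hΛ).weaken hΛA,
    fun x n u => ?_, fun x n hn => ?_, fun x y => h.eq_of_forall_dist_iterate_le hF hΛ hr⟩
  · obtain ⟨w, hw, hsum⟩ := h.exists_pull hΛ.continuous hF x n u
    exact ⟨w, hw, hsum.trans (by gcongr)⟩
  · obtain ⟨w, hw, hsum⟩ := h.exists_close hΛ.continuous hF x hn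
    exact ⟨w, hw, hsum.trans (by gcongr)⟩

end IsAdaptedMetric

/-! ### Uniform expansion near an expanding map -/

lemma uniformContinuous_of_periodic {g : ℝ → ℝ} (hg : Continuous g) (hper : Periodic g 1) :
    UniformContinuous g := by
  have hlift : Continuous (hper.lift : Circle1 → ℝ) := continuous_coinduced_dom.2 hg
  exact (CompactSpace.uniformContinuous_of_continuous hlift).comp
    lipschitzWith_coe.uniformContinuous

lemma periodic_deriv {F : ℝ → ℝ} {c : ℝ} (hF : ∀ x, F (x + 1) = F x + c) :
    Periodic (deriv F) 1 := fun x => by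
  rw [← deriv_comp_add_const]
  simp only [hF, deriv_add_const]

lemma exists_lipschitzWith_of_map_add_one {F : ℝ → ℝ} {c : ℝ} (hF : ContDiff ℝ 1 F)
    (hF₁ : ∀ x, F (x + 1) = F x + c) :
    ∃ Λ, LipschitzWith Λ F ∧ ∀ x, ‖deriv F x‖₊ ≤ Λ := by
  obtain ⟨B, hB⟩ := ((periodic_deriv hF₁).isBounded_of_continuous one_ne_zero
    (hF.continuous_deriv le_rfl)).exists_norm_le
  have hB' (x : ℝ) : ‖deriv F x‖₊ ≤ B.toNNReal :=
    NNReal.le_toNNReal_of_coe_le (hB _ ⟨x, rfl⟩)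
  exact ⟨_, lipschitzWith_of_nnnorm_deriv_le (hF.differentiable one_ne_zero) hB', hB'⟩

lemma contDiff_iterate {𝕜 E : Type*} [NontriviallyNormedField 𝕜] [NormedAddCommGroup E]
    [NormedSpace 𝕜 E] {m : WithTop ℕ∞} {F : E → E} (hF : ContDiff 𝕜 m F) (n : ℕ) :
    ContDiff 𝕜 m F^[n] := by
  induction n with
  | zero => exact contDiff_id
  | succ n ih => exact ih.comp hF

lemma mul_dist_le_dist_of_le_abs_deriv {g : ℝ → ℝ} (hg : Differentiable ℝ g) {b : ℝ}
    (hb : ∀ x, b ≤ |deriv g x|) (x y : ℝ) : b * dist x y ≤ dist (g x) (g y) := by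
  wlog hxy : y < x generalizing x y
  · rcases (not_lt.1 hxy).eq_or_lt with rfl | hlt
    · simp
    · rw [dist_comm x, dist_comm (g x)]
      exact this y x hlt
  obtain ⟨z, -, hz⟩ := exists_deriv_eq_slope g hxy hg.continuous.continuousOn
    fun z _ => (hg z).differentiableWithinAt
  have hmul : g x - g y = deriv g z * (x - y) := by
    rw [hz, div_mul_cancel₀ _ (sub_pos.2 hxy).ne']
  rw [Real.dist_eq, Real.dist_eq, hmul, abs_mul]
  exact mul_le_mul_of_nonneg_right (hb z) (abs_nonneg _)

section Perturbation

variable {ι : Type*} {l : Filter ι} {F : ι → ℝ → ℝ} {F₀ : ℝ → ℝ}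

lemma tendstoUniformly_mul_of_bounded {α : Type*} {g h : ι → α → ℝ} {g₀ h₀ : α → ℝ} {B : ℝ}
    (hg₀ : ∀ x, |g₀ x| ≤ B) (hh₀ : ∀ x, |h₀ x| ≤ B) (hg : TendstoUniformly g g₀ l)
    (hh : TendstoUniformly h h₀ l) :
    TendstoUniformly (fun i x => g i x * h i x) (fun x => g₀ x * h₀ x) l := by
  have hbound {u : ι → α → ℝ} {u₀ : α → ℝ} (hu₀ : ∀ x, |u₀ x| ≤ B) (hu : TendstoUniformly u u₀ l) :
      ∀ᶠ i in l, ∀ x, u i x ∈ Icc (-(B + 1)) (B + 1) := by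
    filter_upwards [Metric.tendstoUniformly_iff.1 hu 1 one_pos] with i hi x
    have := abs_lt.1 (hi x)
    have := abs_le.1 (hu₀ x)
    constructor <;> linarith
  have hmul : UniformContinuousOn (fun z : ℝ × ℝ => z.1 * z.2)
      (Icc (-(B + 1)) (B + 1) ×ˢ Icc (-(B + 1)) (B + 1)) :=
    (isCompact_Icc.prod isCompact_Icc).uniformContinuousOn_of_continuous (by fun_prop)
  refine hmul.comp_tendstoUniformly_eventually (F := fun i x => (g i x, h i x))
    (f := fun x => (g₀ x, h₀ x)) ?_ (fun x => ?_)
    fun u hu => tendsto_diag.eventually (hg.prodMk hh u hu)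
  · filter_upwards [hbound hg₀ hg, hbound hh₀ hh] with i hgi hhi x
    exact ⟨hgi x, hhi x⟩
  · have := abs_le.1 (hg₀ x)
    have := abs_le.1 (hh₀ x)
    exact ⟨⟨by linarith, by linarith⟩, by linarith, by linarith⟩

lemma eventually_lipschitzWith_comp_sub_comp {P : ℝ → ℝ} {c c₀ : ℝ} (hP : ContDiff ℝ 1 P)
    (hP₁ : ∀ x, P (x + 1) = P x + c) (hF₀ : ContDiff ℝ 1 F₀)
    (hF₁ : ∀ x, F₀ (x + 1) = F₀ x + c₀) (hdiff : ∀ᶠ i in l, Differentiable ℝ (F i))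
    (hF : TendstoUniformly F F₀ l)
    (hderiv : TendstoUniformly (fun i => deriv (F i)) (deriv F₀) l) {τ : ℝ≥0} (hτ : 0 < τ) :
    ∀ᶠ i in l, LipschitzWith τ fun x => P (F₀ x) - P (F i x) := by
  obtain ⟨B, -, hB⟩ := exists_lipschitzWith_of_map_add_one hP hP₁
  obtain ⟨B₀, -, hB₀⟩ := exists_lipschitzWith_of_map_add_one hF₀ hF₁
  have hPF := (uniformContinuous_of_periodic (hP.continuous_deriv le_rfl)
    (periodic_deriv hP₁)).comp_tendstoUniformly hF
  have hprod := tendstoUniformly_mul_of_bounded (B := max B B₀)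
    (fun x => le_max_of_le_left (hB (F₀ x))) (fun x => le_max_of_le_right (hB₀ x)) hPF hderiv
  filter_upwards [Metric.tendstoUniformly_iff.1 hprod τ hτ, hdiff] with i hi hdFi
  have hchain {G : ℝ → ℝ} (hG : Differentiable ℝ G) (x : ℝ) :
      HasDerivAt (fun x => P (G x)) (deriv P (G x) * deriv G x) x :=
    (hP.differentiable one_ne_zero _).hasDerivAt.comp x (hG x).hasDerivAt
  have hsub (x : ℝ) := (hchain (hF₀.differentiable one_ne_zero) x).fun_sub (hchain hdFi x)
  refine lipschitzWith_of_nnnorm_deriv_le (fun x => (hsub x).differentiableAt) fun x => ?_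
  rw [(hsub x).deriv]
  exact (hi x).le

end Perturbation

/-- The distance of the orbit segments of length `N` of two points under `F`, in the
`ℓ¹`-sense. -/
def orbitDist (F : ℝ → ℝ) (N : ℕ) (x y : ℝ) : ℝ :=
  ∑ i ∈ Finset.range N, dist (F^[i] x) (F^[i] y)

section OrbitDist

variable {F F₀ : ℝ → ℝ} {N : ℕ} {Λ τ : ℝ≥0}

lemma orbitDist_map_add (F : ℝ → ℝ) (N : ℕ) (x y : ℝ) :
    orbitDist F N (F x) (F y) + dist x y = orbitDist F N x y + dist (F^[N] x) (F^[N] y) := by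
  simp only [orbitDist, ← iterate_succ_apply]
  rw [← Finset.sum_range_succ, Finset.sum_range_succ' _ N, iterate_zero_apply, iterate_zero_apply]

lemma orbitDist_le_mul_dist (hF : LipschitzWith Λ F) (N : ℕ) (x y : ℝ) :
    orbitDist F N x y ≤ (∑ i ∈ Finset.range N, Λ ^ i : ℝ≥0) * dist x y := by
  push_cast
  rw [Finset.sum_mul]
  refine Finset.sum_le_sum fun i _ => ?_
  exact_mod_cast (hF.iterate i).dist_le_mul x y

lemma orbitDist_map_le (h : ∀ i < N, LipschitzWith τ fun x => F₀^[i] (F₀ x) - F₀^[i] (F x))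
    (x y : ℝ) :
    orbitDist F₀ N (F₀ x) (F₀ y) ≤ orbitDist F₀ N (F x) (F y) + N * (τ * dist x y) := by
  have hconst : (N : ℝ) * (τ * dist x y) = ∑ _i ∈ Finset.range N, τ * dist x y := by
    rw [Finset.sum_const, Finset.card_range, nsmul_eq_mul]
  rw [hconst, orbitDist, orbitDist, ← Finset.sum_add_distrib]
  refine Finset.sum_le_sum fun i hi => ?_
  have hlip := (h i (Finset.mem_range.1 hi)).dist_le_mul x y
  have htri := abs_sub_abs_le_abs_sub (F₀^[i] (F₀ x) - F₀^[i] (F₀ y))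
    (F₀^[i] (F x) - F₀^[i] (F y))
  rw [sub_sub_sub_comm] at htri
  rw [Real.dist_eq (_ - _)] at hlip
  rw [Real.dist_eq, Real.dist_eq (F₀^[i] (F x))]
  linarith

/-- Since `ρ(F₀ x, F₀ y) - ρ(x, y) = |F₀ᴺ x - F₀ᴺ y| - |x - y| ≥ |x - y|` for `ρ = orbitDist F₀ N`,
there is room for a perturbation of size `|x - y| / 2`. -/
lemma isAdaptedMetric_orbitDist {d₀ : ℤ} (hF₀ : LipschitzWith Λ F₀)
    (hF₁ : ∀ x, F₀ (x + 1) = F₀ x + d₀) (hexp : ∀ x y, 2 * dist x y ≤ dist (F₀^[N] x) (F₀^[N] y))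
    (hclose : ∀ i < N, LipschitzWith τ fun x => F₀^[i] (F₀ x) - F₀^[i] (F x))
    (hτ : (N * τ : ℝ) ≤ 1 / 2) :
    IsAdaptedMetric F (orbitDist F₀ N) (∑ i ∈ Finset.range N, Λ ^ i)
      (2 * (∑ i ∈ Finset.range N, Λ ^ i : ℝ≥0) /
        (2 * (∑ i ∈ Finset.range N, Λ ^ i : ℝ≥0) + 1)) where
  nonneg := by positivity
  lt_one := by
    rw [div_lt_one (by positivity)]
    exact lt_add_one _
  dist_le x y := by
    have hN : N ≠ 0 := by
      rintro rfl
      simpa using hexp 1 0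
    simpa [orbitDist] using Finset.single_le_sum (f := fun i => dist (F₀^[i] x) (F₀^[i] y))
      (fun _ _ => dist_nonneg) (Finset.mem_range.2 hN.bot_lt)
  le_mul_dist := orbitDist_le_mul_dist hF₀ N
  triangle x y z := by
    rw [orbitDist, orbitDist, orbitDist, ← Finset.sum_add_distrib]
    exact Finset.sum_le_sum fun i _ => dist_triangle _ _ _
  add_int x y k := Finset.sum_congr rfl fun i _ => by
    rw [map_add_int_of_map_add_one (iterate_add_one hF₁ i),
      map_add_int_of_map_add_one (iterate_add_one hF₁ i), dist_add_right]
  le_mul_map x y := by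
    have hup := orbitDist_le_mul_dist hF₀ N x y
    have hgain : orbitDist F₀ N x y + dist x y / 2 ≤ orbitDist F₀ N (F x) (F y) := by
      have := mul_le_mul_of_nonneg_right hτ (dist_nonneg (x := x) (y := y))
      linarith [orbitDist_map_le hclose x y, orbitDist_map_add F₀ N x y, hexp x y]
    rw [div_mul_eq_mul_div, le_div_iff₀ (by positivity)]
    nlinarith [NNReal.coe_nonneg (∑ i ∈ Finset.range N, Λ ^ i)]

end OrbitDist

lemma exists_two_mul_dist_le_dist_iterate {F : ℝ → ℝ} (hF : Differentiable ℝ F) {C lam : ℝ}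
    (hC : 0 < C) (hlam : 1 < lam)
    (hexp : ∀ n : ℕ, 1 ≤ n → ∀ x : ℝ, C * lam ^ n ≤ |deriv (F^[n]) x|) :
    ∃ N, ∀ x y, 2 * dist x y ≤ dist (F^[N] x) (F^[N] y) := by
  obtain ⟨n, hn⟩ := pow_unbounded_of_one_lt (2 / C) hlam
  rw [div_lt_iff₀' hC] at hn
  refine ⟨n + 1, mul_dist_le_dist_of_le_abs_deriv (hF.iterate _) fun x => ?_⟩
  refine hn.le.trans (le_trans ?_ (hexp (n + 1) n.succ_pos x))
  gcongr
  exacts [hlam.le, n.le_succ]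

theorem exists_eventually_isExpandingWith {ι : Type*} {l : Filter ι} {F : ι → ℝ → ℝ}
    {F₀ : ℝ → ℝ} (hF₀ : ExpandingLift 1 F₀)
    (hF : ∀ᶠ i in l, Differentiable ℝ (F i) ∧ ∃ d : ℤ, ∀ x, F i (x + 1) = F i x + d)
    (hlim : TendstoUniformly F F₀ l)
    (hderiv : TendstoUniformly (fun i => deriv (F i)) (deriv F₀) l) :
    ∃ A r, ∀ᶠ i in l, IsExpandingWith A r (cmap (F i)) := by
  obtain ⟨hC₁, ⟨d₀, hd₀⟩, C, hC, lam, hlam, hexp⟩ := hF₀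
  obtain ⟨N, hN⟩ :=
    exists_two_mul_dist_le_dist_iterate (hC₁.differentiable one_ne_zero) hC hlam hexp
  obtain ⟨Λ, hΛ, -⟩ := exists_lipschitzWith_of_map_add_one hC₁ hd₀
  obtain ⟨τ, hτ, hNτ⟩ := exists_pos_mul_lt (one_half_pos (α := ℝ≥0)) (N : ℝ≥0)
  have hclose (n : ℕ) {σ : ℝ≥0} (hσ : 0 < σ) :
      ∀ᶠ i in l, LipschitzWith σ fun x => F₀^[n] (F₀ x) - F₀^[n] (F i x) :=
    eventually_lipschitzWith_comp_sub_comp (contDiff_iterate hC₁ n) (iterate_add_one hd₀ n) hC₁ hd₀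
      (hF.mono fun _ h => h.1) hlim hderiv hσ
  set M : ℝ≥0 := ∑ i ∈ Finset.range N, Λ ^ i
  set B : ℝ := M * (1 - 2 * (M : ℝ) / (2 * M + 1))⁻¹
  refine ⟨max (Λ + 1) (B * (B + 1)).toNNReal, 1 / (2 * (Λ + 1)), ?_⟩
  filter_upwards [hF, hclose 0 one_pos,
    (Finset.range N).eventually_all.2 fun n _ => hclose n hτ] with i ⟨_, d, hd⟩ hlip hi
  have hΛi : LipschitzWith (Λ + 1) (F i) := by
    simpa using hΛ.sub hlip
  refine (isAdaptedMetric_orbitDist hΛ hd₀ hN (fun n hn => hi n (Finset.mem_range.2 hn))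
    (by exact_mod_cast hNτ.le)).isExpandingWith hd hΛi (le_max_left _ _)
    ?_ (by positivity) (le_of_eq ?_)
  · exact (Real.le_coe_toNNReal _).trans (by exact_mod_cast le_max_right _ _)
  · push_cast
    field_simp

/-! ### The `C^r` topologies -/

section ExpMap

variable {r : ℕ∞}

lemma ExpandingLift.of_le {s : ℕ∞} {F : ℝ → ℝ} (hF : ExpandingLift r F) (h : s ≤ r) :
    ExpandingLift s F :=
  ⟨hF.1.of_le (by exact_mod_cast h), hF.2⟩

lemma tendstoUniformly_iteratedDeriv (F₀ : ExpMap r) {k : ℕ} (hk : (k : ℕ∞) ≤ r) :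
    TendstoUniformly (fun F : ExpMap r => iteratedDeriv k F.1) (iteratedDeriv k F₀.1) (𝓝 F₀) := by
  have hcont : Continuous fun F : ExpMap r => crSeq r F.1 k :=
    (continuous_apply k).comp (continuous_induced_dom (f := fun F : ExpMap r => crSeq r F.1))
  have := UniformFun.tendsto_iff_tendstoUniformly.1 (hcont.tendsto F₀)
  simpa only [crSeq, if_pos hk, comp_def, UniformFun.toFun_ofFun] using this

lemma tendstoUniformly_lift (F₀ : ExpMap r) :
    TendstoUniformly (fun F : ExpMap r => F.1) F₀.1 (𝓝 F₀) := by
  simpa only [iteratedDeriv_zero] using tendstoUniformly_iteratedDeriv F₀ (k := 0) zero_le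

lemma tendstoUniformly_cmap (F₀ : ExpMap r) :
    TendstoUniformly (fun F : ExpMap r => cmap F.1) (cmap F₀.1) (𝓝 F₀) :=
  (lipschitzWith_coe.uniformContinuous.comp_tendstoUniformly (tendstoUniformly_lift F₀)).comp rep

lemma exists_eventually_isExpandingWith_cmap (hr : 1 ≤ r) (F₀ : ExpMap r) :
    ∃ A ρ, ∀ᶠ F in 𝓝 F₀, IsExpandingWith A ρ (cmap F.1) := by
  have hexp (F : ExpMap r) : ExpandingLift 1 F.1 := ExpandingLift.of_le F.2 hr
  refine exists_eventually_isExpandingWith (hexp F₀)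
    (.of_forall fun F => ⟨(hexp F).1.differentiable one_ne_zero, F.2.2.1⟩)
    (tendstoUniformly_lift F₀) ?_
  simpa only [iteratedDeriv_one] using
    tendstoUniformly_iteratedDeriv F₀ (k := 1) (by exact_mod_cast hr)

end ExpMap

lemma exists_norm_le_of_periodic_snd {P E : Type*} [TopologicalSpace P] [SeminormedAddCommGroup E]
    {g : P × ℝ → E} (hg : Continuous g) (hper : ∀ t, Periodic (fun x => g (t, x)) 1) {K : Set P}
    (hK : IsCompact K) : ∃ B : ℝ≥0, ∀ t ∈ K, ∀ x, ‖g (t, x)‖ ≤ B := by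
  obtain ⟨B, hB⟩ := (hK.prod isCompact_Icc).exists_bound_of_continuousOn hg.continuousOn
  refine ⟨B.toNNReal, fun t ht x => ?_⟩
  obtain ⟨y, hy, hxy⟩ := (hper t).exists_mem_Ico₀ one_pos x
  exact hxy ▸ (hB (t, y) ⟨ht, Ico_subset_Icc_self hy⟩).trans (Real.le_coe_toNNReal B)

section FamFun

variable {r : ℕ∞} {q : ℕ}

lemma famMem_coe (G : FamFun r q) (t : Fin q → ℝ) (x : ℝ) : famMem G t x = G.1 (t, x) := by
  obtain ⟨k, hk⟩ := apply_rep_coe (F := fun x => G.1 (t, x)) (c := 0) (by simpa using G.2.2 t) x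
  simpa [famMem] using hk

lemma continuous_famMem (G : FamFun r q) : Continuous ↿(famMem G) := by
  have hmk : IsOpenQuotientMap ((↑) : ℝ → Circle1) := QuotientAddGroup.isOpenQuotientMap_mk
  rw [← (IsOpenQuotientMap.id.prodMap hmk).continuous_comp_iff]
  exact G.2.1.continuous.congr fun z => (famMem_coe G z.1 z.2).symm

lemma tendstoUniformly_iteratedFDeriv (G₀ : FamFun r q) {k : ℕ} (hk : (k : ℕ∞) ≤ r) :
    TendstoUniformly (fun G : FamFun r q => iteratedFDeriv ℝ k G.1) (iteratedFDeriv ℝ k G₀.1)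
      (𝓝 G₀) := by
  have hcont : Continuous fun G : FamFun r q => famSeq r q G.1 k :=
    (continuous_apply k).comp (continuous_induced_dom (f := fun G : FamFun r q => famSeq r q G.1))
  have := UniformFun.tendsto_iff_tendstoUniformly.1 (hcont.tendsto G₀)
  simpa only [famSeq, if_pos hk, comp_def, UniformFun.toFun_ofFun] using this

lemma tendstoUniformly_family (G₀ : FamFun r q) :
    TendstoUniformly (fun G : FamFun r q => G.1) G₀.1 (𝓝 G₀) := by
  have := (continuousMultilinearCurryFin0 ℝ ((Fin q → ℝ) × ℝ) ℝ).isometry.uniformContinuous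
    |>.comp_tendstoUniformly (tendstoUniformly_iteratedFDeriv G₀ (k := 0) zero_le)
  simpa [comp_def, iteratedFDeriv_zero_eq_comp] using this

lemma tendstoUniformly_norm_fderiv (hr : 1 ≤ r) (G₀ : FamFun r q) :
    TendstoUniformly (fun (G : FamFun r q) z => ‖fderiv ℝ G.1 z‖) (fun z => ‖fderiv ℝ G₀.1 z‖)
      (𝓝 G₀) := by
  have := uniformContinuous_norm.comp_tendstoUniformly
    (tendstoUniformly_iteratedFDeriv G₀ (k := 1) (by exact_mod_cast hr))
  simpa only [comp_def, norm_iteratedFDeriv_one] using this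

lemma tendstoUniformly_famMem (G₀ : FamFun r q) (t₀ : Fin q → ℝ) :
    TendstoUniformly (fun z : FamFun r q × (Fin q → ℝ) => famMem z.1 z.2) (famMem G₀ t₀)
      (𝓝 (G₀, t₀)) := by
  rw [Metric.tendstoUniformly_iff]
  intro ε hε
  have hfam := Metric.tendstoUniformly_iff.1 (tendstoUniformly_family G₀) _ (half_pos hε)
  have hparam := Metric.tendstoUniformly_iff.1
    ((continuous_famMem G₀).tendstoUniformly _ t₀) _ (half_pos hε)
  filter_upwards [hfam.prod_inl_nhds t₀, hparam.prod_inr_nhds G₀] with z hG ht x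
  calc dist (famMem G₀ t₀ x) (famMem z.1 z.2 x)
      ≤ dist (famMem G₀ t₀ x) (famMem G₀ z.2 x) + dist (famMem G₀ z.2 x) (famMem z.1 z.2 x) :=
        dist_triangle _ _ _
    _ < ε / 2 + ε / 2 := add_lt_add (ht x) (hG (z.2, rep x))
    _ = ε := add_halves ε

lemma contDiff_one_family (hr : 1 ≤ r) (G : FamFun r q) : ContDiff ℝ 1 G.1 :=
  G.2.1.of_le (by exact_mod_cast hr)

lemma lipschitzWith_famMem (hr : 1 ≤ r) (G : FamFun r q) (t : Fin q → ℝ) {K : ℝ≥0}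
    (hK : ∀ x, ‖fderiv ℝ G.1 (t, x)‖ ≤ K) : LipschitzWith K (famMem G t) := by
  refine lipschitzWith_of_comp_coe (.of_dist_le_mul fun x y => ?_)
  have hlip : LipschitzOnWith K G.1 ({t} ×ˢ univ) :=
    ((convex_singleton t).prod convex_univ).lipschitzOnWith_of_nnnorm_fderiv_le
      (fun z _ => (contDiff_one_family hr G).differentiable one_ne_zero z)
      (by rintro ⟨_, x⟩ ⟨rfl, -⟩; exact hK x)
  simpa only [famMem_coe, dist_prod_same_left] using
    hlip.dist_le_mul (t, x) ⟨rfl, mem_univ x⟩ (t, y) ⟨rfl, mem_univ y⟩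

lemma exists_eventually_lipschitzWith_famMem (hr : 1 ≤ r) (G₀ : FamFun r q) (t₀ : Fin q → ℝ) :
    ∃ K, ∀ᶠ z in 𝓝 (G₀, t₀), LipschitzWith K (famMem z.1 z.2) := by
  have hper (t : Fin q → ℝ) : Periodic (fun x => fderiv ℝ G₀.1 (t, x)) 1 := fun x => by
    have hshift := fderiv_comp_add_right (𝕜 := ℝ) (f := G₀.1) (x := (t, x)) (0, 1)
    have hG : (fun z => G₀.1 (z + (0, 1))) = G₀.1 := funext fun ⟨s, y⟩ => by
      simpa using G₀.2.2 s y
    simpa [hG] using hshift.symm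
  obtain ⟨B, hB⟩ := exists_norm_le_of_periodic_snd
    ((contDiff_one_family hr G₀).continuous_fderiv one_ne_zero) hper (isCompact_closedBall t₀ 1)
  refine ⟨B + 1, ?_⟩
  have hfam := Metric.tendstoUniformly_iff.1 (tendstoUniformly_norm_fderiv hr G₀) 1 one_pos
  filter_upwards [hfam.prod_inl_nhds t₀,
    (eventually_mem_set.2 (Metric.closedBall_mem_nhds t₀ one_pos)).prod_inr_nhds G₀] with z hz ht
  refine lipschitzWith_famMem hr z.1 z.2 fun x => ?_
  have := abs_lt.1 (hz (z.2, x))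
  have := hB z.2 ht x
  push_cast
  linarith

end FamFun

/-! ### Openness -/

theorem isOpen_isPeriodicOrbit {r : ℕ∞} (hr : 1 ≤ r) (q : ℕ) :
    IsOpen {z : (FamFun r q × ExpMap r) × (Fin q → ℝ) |
      IsPeriodicOrbit (cmap z.1.2.1) (OmegaSet (famMem z.1.1 z.2) (cmap z.1.2.1))} := by
  rw [isOpen_iff_eventually]
  rintro ⟨⟨G₀, F₀⟩, t₀⟩ hΩ
  obtain ⟨A, ρ, hexp⟩ := exists_eventually_isExpandingWith_cmap hr F₀
  obtain ⟨K, hlip⟩ := exists_eventually_lipschitzWith_famMem hr G₀ t₀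
  replace hexp := hexp.mono fun F hF => hF.mono (le_max_left A K)
  replace hlip := hlip.mono fun z hz => hz.weaken (le_max_right A K)
  have hmap : Tendsto (fun z : (FamFun r q × ExpMap r) × (Fin q → ℝ) => z.1.2)
      (𝓝 ((G₀, F₀), t₀)) (𝓝 F₀) := by
    exact Continuous.tendsto (by fun_prop) ((G₀, F₀), t₀)
  have hfam : Tendsto (fun z : (FamFun r q × ExpMap r) × (Fin q → ℝ) => (z.1.1, z.2))
      (𝓝 ((G₀, F₀), t₀)) (𝓝 (G₀, t₀)) := by
    exact Continuous.tendsto (by fun_prop) ((G₀, F₀), t₀)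
  exact eventually_isPeriodicOrbit_omegaSet hexp.self_of_nhds hlip.self_of_nhds
    (hmap.eventually hexp) (hfam.eventually hlip)
    (fun u hu => hmap.eventually (tendstoUniformly_cmap F₀ u hu))
    (fun u hu => hfam.eventually (tendstoUniformly_famMem G₀ t₀ u hu)) hΩ

lemma isOpen_setOf_lt_measure {X Y : Type*} [TopologicalSpace X] [TopologicalSpace Y]
    [MeasurableSpace Y] [OpensMeasurableSpace Y] {μ : Measure Y}
    [μ.InnerRegular] {S : Set Y} (hS : MeasurableSet S)
    {U : Set (X × Y)} (hU : IsOpen U) (c : ENNReal) :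
    IsOpen {x | c < μ {y | y ∈ S ∧ (x, y) ∈ U}} := by
  rw [isOpen_iff_eventually]
  intro x₀ hx₀
  have hslice : IsOpen {y | (x₀, y) ∈ U} := hU.preimage (by fun_prop)
  obtain ⟨K, hKs, hK, hlt⟩ := (hS.inter hslice.measurableSet).exists_lt_isCompact hx₀
  have hev : ∀ᶠ x in 𝓝 x₀, ∀ y ∈ K, (x, y) ∈ U :=
    hK.eventually_forall_of_forall_eventually fun y hy => hU.eventually_mem (hKs hy).2
  filter_upwards [hev] with x hx
  exact hlt.trans_le (measure_mono fun y hy => ⟨(hKs hy).1, hx y hy⟩)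

end ErgodicOptimization

/-- Lemma 2.7: for each `ε ∈ (0,1)`, the set of pairs `((f_t), T)` such that
`m_q({t ∈ [0,1]^q : Ω(f_t,T)` is a periodic orbit `}) > ε` is open in `𝓕 × 𝓔^r`. -/
theorem family_measure_open (r : ℕ∞) (hr : 1 ≤ r) (q : ℕ) (hq : 1 ≤ q)
    (ε : ℝ) (hε0 : 0 < ε) (hε1 : ε < 1) :
    IsOpen {p : FamFun r q × ExpMap r |
      ENNReal.ofReal ε < volume {t : Fin q → ℝ | (∀ i, t i ∈ Set.Icc (0 : ℝ) 1) ∧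
        IsPeriodicOrbit (cmap p.2.1) (OmegaSet (famMem p.1 t) (cmap p.2.1))}} := by
  have hcube : MeasurableSet {t : Fin q → ℝ | ∀ i, t i ∈ Set.Icc (0 : ℝ) 1} := by
    rw [ofPred_forall]
    exact .iInter fun i => measurable_pi_apply i measurableSet_Icc
  exact ErgodicOptimization.isOpen_setOf_lt_measure hcube
    (ErgodicOptimization.isOpen_isPeriodicOrbit hr q) _
end

section
/- Let T ∈ 𝓔^ω be orientation-preserving with T(π(0)) = π(0), let K be a nonempty compact subset of ℝ/ℤ with T(K) = K, and let f ∈ 𝓒^1. Suppose that K has no f-supercritical value and that there is a continuous sub-action g of (f,T) with K ⊆ E_{f,T,g}. Then T|K is Sturmian-like. -/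
/-!
For a word `i ∈ CL(y, K)`, the sub-action inequality along the backward orbit of `y` telescopes to
`h_i(z) - h_i(y) ≤ g(z) - g(y)` for every `z`: the function `h_i` supports `g` from below at `y`.
If `y` decreases to `x`, a limit of words of `CL(y, K)` is a word of `CL(x, K)`, and comparing
slopes over `[x, y]` shows that it maximises `h_i'(x)` among the words of `CL(x, K)`. Without
`f`-supercritical values, all the maximisers have the same first letter, so the words of `CL(y, K)`
have this first letter once `y > x` is close to `x`: there `K` selects a single inverse branch.
Points on the left of `x` are treated by reflection.
-/

open MeasureTheory Topology Filter Set
open scoped UniformConvergence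

/-! ### Families of functions supporting a given function from below -/

lemma exists_deriv_eq_slope_of_ne {f : ℝ → ℝ} (hf : Differentiable ℝ f) {x y : ℝ} (hxy : x ≠ y) :
    ∃ c ∈ uIcc x y, deriv f c = slope f x y := by
  wlog hlt : x < y generalizing x y
  · rw [uIcc_comm, slope_comm]
    exact this hxy.symm (hxy.symm.lt_of_le (not_lt.1 hlt))
  obtain ⟨c, hc, hslope⟩ :=
    exists_deriv_eq_slope' f hlt hf.continuous.continuousOn hf.differentiableOn
  exact ⟨c, Icc_subset_uIcc (Ioo_subset_Icc_self hc), hslope⟩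

/-- The functions `h i` support `φ` from below, up to an additive constant, at every point `y` with
`(i, y) ∈ R`. For the transfer sums `h^f_i` of a sub-action `φ`, the relation `R` is
`i ∈ CL(y, K)`. -/
def SupportsBelow {I : Type*} (h : I → ℝ → ℝ) (φ : ℝ → ℝ) (R : Set (I × ℝ)) : Prop :=
  ∀ i y, (i, y) ∈ R → ∀ z, h i z - h i y ≤ φ z - φ y

section Support

variable {I : Type*} {h : I → ℝ → ℝ} {φ : ℝ → ℝ} {R : Set (I × ℝ)} {x : ℝ}

lemma SupportsBelow.slope_le_slope (hR : SupportsBelow h φ R) {i j : I} {y : ℝ}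
    (hj : (j, x) ∈ R) (hi : (i, y) ∈ R) (hxy : x < y) : slope (h j) x y ≤ slope (h i) x y := by
  rw [slope_def_field, slope_def_field]
  refine div_le_div_of_nonneg_right ?_ (sub_pos.2 hxy).le
  linarith [hR j x hj y, hR i y hi x]

lemma SupportsBelow.comp_neg (hR : SupportsBelow h φ R) :
    SupportsBelow (fun i y => h i (-y)) (fun y => φ (-y)) {p | (p.1, -p.2) ∈ R} :=
  fun i y hi z => hR i (-y) hi (-z)

variable [TopologicalSpace I]

lemma tendsto_slope_of_continuousAt_deriv (hd : ∀ i, Differentiable ℝ (h i)) {i : I}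
    (hc : ContinuousAt (fun p : I × ℝ => deriv (h p.1) p.2) (i, x)) :
    Tendsto (fun p : I × ℝ => slope (h p.1) x p.2) (𝓝 i ×ˢ 𝓝[≠] x) (𝓝 (deriv (h i) x)) := by
  refine tendsto_def.2 fun V hV => ?_
  obtain ⟨A, hA, B, hB, hAB⟩ := mem_nhds_prod_iff.1 (hc hV)
  obtain ⟨ε, hε, hball⟩ := Metric.mem_nhds_iff.1 hB
  filter_upwards [prod_mem_prod hA (inter_mem_nhdsWithin {x}ᶜ (Metric.ball_mem_nhds x hε))]
  rintro ⟨j, y⟩ ⟨hj, hyx, hy⟩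
  obtain ⟨c, hc, hslope⟩ := exists_deriv_eq_slope_of_ne (hd j) (Ne.symm hyx)
  have hcball : c ∈ Metric.ball x ε :=
    (convex_ball x ε).ordConnected.uIcc_subset (Metric.mem_ball_self hε) hy hc
  rw [mem_preimage, ← hslope]
  exact hAB (mk_mem_prod hj (hball hcball))

variable [CompactSpace I]

/-- The slopes over `[x, y]` of a function supporting `φ` at `y` dominate those of a function
supporting `φ` at `x`; as `y` decreases to `x`, slopes become derivatives. -/
lemma SupportsBelow.exists_forall_deriv_le (hR : SupportsBelow h φ R)
    (hd : ∀ i, Differentiable ℝ (h i))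
    (hc : Continuous fun p : I × ℝ => deriv (h p.1) p.2) (hRc : IsClosed R)
    {P : Set I} (hP : IsClosed P) (hfreq : ∃ᶠ y in 𝓝[>] x, ∃ i ∈ P, (i, y) ∈ R) :
    ∃ i ∈ P, (i, x) ∈ R ∧ ∀ j, (j, x) ∈ R → deriv (h j) x ≤ deriv (h i) x := by
  have hfreq' : ∃ᶠ p in comap Prod.snd (𝓝[>] x), p ∈ {p : I × ℝ | p.1 ∈ P ∧ p ∈ R} :=
    frequently_comap.2 <| hfreq.mono fun y ⟨i, hi, hiy⟩ => ⟨(i, y), rfl, hi, hiy⟩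
  obtain ⟨U, hUle⟩ := exists_ultrafilter_iff.2 (frequently_mem_iff_neBot.1 hfreq')
  obtain ⟨hU_comap, hU_mem⟩ := le_inf_iff.1 hUle
  rw [le_principal_iff] at hU_mem
  have hx : Tendsto Prod.snd (U : Filter (I × ℝ)) (𝓝[>] x) := tendsto_iff_comap.2 hU_comap
  obtain ⟨i, hi⟩ : ∃ i, Tendsto Prod.fst (U : Filter (I × ℝ)) (𝓝 i) :=
    ⟨_, (U.map Prod.fst).le_nhds_lim⟩
  have hix : Tendsto (fun p => (p.1, p.2)) (U : Filter (I × ℝ)) (𝓝 (i, x)) :=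
    hi.prodMk_nhds (hx.mono_right nhdsWithin_le_nhds)
  have hslope (j : I) (ξ : I × ℝ → I) (hξ : Tendsto ξ U (𝓝 j)) :
      Tendsto (fun p => slope (h (ξ p)) x p.2) U (𝓝 (deriv (h j) x)) :=
    (tendsto_slope_of_continuousAt_deriv hd hc.continuousAt).comp <|
      hξ.prodMk (hx.mono_right (nhdsGT_le_nhdsNE x))
  refine ⟨i, hP.mem_of_tendsto hi (mem_of_superset hU_mem fun _ hp => hp.1),
    hRc.mem_of_tendsto hix (mem_of_superset hU_mem fun _ hp => hp.2), fun j hj => ?_⟩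
  refine le_of_tendsto_of_tendsto (hslope j _ tendsto_const_nhds) (hslope i _ hi) ?_
  filter_upwards [hU_mem, hx.eventually self_mem_nhdsWithin] with p hp hxp
  exact hR.slope_le_slope hj hp.2 hxp

lemma SupportsBelow.exists_eventually_nhdsGT_eq {A : Type*} [Nonempty A] {c : I → A}
    (hR : SupportsBelow h φ R) (hd : ∀ i, Differentiable ℝ (h i))
    (hc : Continuous fun p : I × ℝ => deriv (h p.1) p.2) (hRc : IsClosed R)
    (hcl : IsLocallyConstant c)
    (hsep : ∀ i j, (i, x) ∈ R → (j, x) ∈ R → deriv (h i) x = deriv (h j) x → c i = c j) :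
    ∃ a, ∀ᶠ y in 𝓝[>] x, ∀ i, (i, y) ∈ R → c i = a := by
  by_contra! hcon
  have hmax (a : A) : ∃ i ∈ (c ⁻¹' {a})ᶜ, (i, x) ∈ R ∧
      ∀ j, (j, x) ∈ R → deriv (h j) x ≤ deriv (h i) x :=
    hR.exists_forall_deriv_le hd hc hRc (hcl.isOpen_fiber a).isClosed_compl <|
      (hcon a).mono fun y ⟨i, hi, hia⟩ => ⟨i, hia, hi⟩
  obtain ⟨i, -, hi, hi_max⟩ := hmax (Classical.arbitrary A)
  obtain ⟨j, hji, hj, hj_max⟩ := hmax (c i)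
  exact hji (hsep j i hj hi (le_antisymm (hi_max j hj) (hj_max i hi)))

lemma SupportsBelow.exists_eventually_nhdsLT_eq {A : Type*} [Nonempty A] {c : I → A}
    (hR : SupportsBelow h φ R) (hd : ∀ i, Differentiable ℝ (h i))
    (hc : Continuous fun p : I × ℝ => deriv (h p.1) p.2) (hRc : IsClosed R)
    (hcl : IsLocallyConstant c)
    (hsep : ∀ i j, (i, x) ∈ R → (j, x) ∈ R → deriv (h i) x = deriv (h j) x → c i = c j) :
    ∃ a, ∀ᶠ y in 𝓝[<] x, ∀ i, (i, y) ∈ R → c i = a := by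
  have hreflect : Continuous fun p : I × ℝ => (p.1, -p.2) := by fun_prop
  have hderiv (i : I) (y : ℝ) : deriv (fun z => h i (-z)) y = -deriv (h i) (-y) :=
    deriv_comp_neg (h i) y
  obtain ⟨a, ha⟩ := hR.comp_neg.exists_eventually_nhdsGT_eq (x := -x) (c := c)
    (fun i => (hd i).comp differentiable_neg)
    ((hc.comp hreflect).neg.congr fun p => (hderiv p.1 p.2).symm)
    (hRc.preimage hreflect) hcl
    (fun i j => by simpa only [mem_ofPred_eq, neg_neg, hderiv, neg_inj] using hsep i j)
  refine ⟨a, ?_⟩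
  filter_upwards [tendsto_neg_nhdsLT.eventually ha] with y hy i hi
  exact hy i (by simpa using hi)

end Support

/-! ### Lifts of circle maps and their inverse branches -/

lemma coe_add_intCast (x : ℝ) (m : ℤ) : ((x + m : ℝ) : Circle1) = x := by
  have hm : ((m : ℝ) : Circle1) = 0 := (AddCircle.coe_eq_zero_iff 1).2 ⟨m, by simp⟩
  rw [AddCircle.coe_add, hm, add_zero]

lemma coe_add_natCast (x : ℝ) (n : ℕ) : ((x + n : ℝ) : Circle1) = x :=
  mod_cast coe_add_intCast x n

lemma exists_eq_add_intCast_of_coe_eq {x y : ℝ} (h : (x : Circle1) = y) : ∃ m : ℤ, x = y + m := by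
  have hsub : ((x - y : ℝ) : Circle1) = 0 := by rw [AddCircle.coe_sub, h, sub_self]
  obtain ⟨m, hm⟩ := (AddCircle.coe_eq_zero_iff 1).1 hsub
  exact ⟨m, by rw [← add_sub_cancel y x, ← hm, zsmul_one]⟩

section Lift

variable {F : ℝ → ℝ} {d : ℕ}

lemma lift_add_intCast (hF : ∀ x, F (x + 1) = F x + d) (x : ℝ) (m : ℤ) :
    F (x + m) = F x + m * d := by
  simpa using AddConstMapClass.map_add_int' (⟨F, hF⟩ : AddConstMap ℝ ℝ 1 (d : ℝ)) x m

lemma lift_add_natCast (hF : ∀ x, F (x + 1) = F x + d) (x : ℝ) (n : ℕ) :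
    F (x + n) = F x + n * d :=
  mod_cast lift_add_intCast hF x n

lemma iterate_lift_add_natCast (hF : ∀ x, F (x + 1) = F x + d) (n : ℕ) (x : ℝ) (q : ℕ) :
    F^[n] (x + q) = F^[n] x + q * d ^ n := by
  induction n with
  | zero => simp
  | succ n ih =>
    have h := lift_add_natCast hF (F^[n] x) (q * d ^ n)
    push_cast at h
    rw [Function.iterate_succ_apply', ih, h, ← Function.iterate_succ_apply' F, pow_succ, mul_assoc]

lemma cmap_coe (hF : ∀ x, F (x + 1) = F x + d) (x : ℝ) :
    cmap F (x : Circle1) = (F x : Circle1) := by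
  obtain ⟨m, hm⟩ := exists_eq_add_intCast_of_coe_eq (x := rep x) (y := x)
    AddCircle.coe_equivIco
  rw [cmap, hm, lift_add_intCast hF]
  exact mod_cast coe_add_intCast (F x) (m * d)

end Lift

/-- `F` is a lift of an orientation-preserving `C¹` expanding circle map of degree `d`. The
orientation is encoded by the degree being a natural number: expansion makes `F` strictly monotone
or strictly antitone, and excludes `d = 0`. -/
structure OrientedExpandingLift (F : ℝ → ℝ) (d : ℕ) : Prop where
  expandingLift : ExpandingLift 1 F
  map_add_one : ∀ x, F (x + 1) = F x + d

lemma AnalyticExpandingLift.orientedExpandingLift {F : ℝ → ℝ} {d : ℕ}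
    (hF : AnalyticExpandingLift F d) : OrientedExpandingLift F d where
  expandingLift := ⟨contDiff_iff_contDiffAt.2 fun x => (hF.1 x).contDiffAt,
    ⟨d, mod_cast hF.2.1⟩, hF.2.2.2.2.2⟩
  map_add_one := hF.2.1

/-- The inverse branch `τ_a(x) = τ(x + a)` of the circle map with lift `F`, where `τ = F⁻¹`. -/
noncomputable def invBranch (F : ℝ → ℝ) (a : ℕ) (x : ℝ) : ℝ := Function.invFun F (x + a)

lemma tauIter_succ (F : ℝ → ℝ) {d : ℕ} (i : ℕ → Fin d) (n : ℕ) (x : ℝ) :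
    tauIter F i (n + 1) x = invBranch F (i n) (tauIter F i n x) := rfl

lemma tauIter_succ' (F : ℝ → ℝ) {d : ℕ} (i : ℕ → Fin d) (n : ℕ) (x : ℝ) :
    tauIter F i (n + 1) x = tauIter F (fun k => i (k + 1)) n (invBranch F (i 0) x) := by
  induction n with
  | zero => rfl
  | succ n ih => rw [tauIter_succ, ih, tauIter_succ]

namespace OrientedExpandingLift

variable {F : ℝ → ℝ} {d : ℕ} (hF : OrientedExpandingLift F d)
include hF

lemma contDiff : ContDiff ℝ 1 F := hF.expandingLift.1

lemma contDiff_iterate (n : ℕ) : ContDiff ℝ 1 F^[n] := by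
  induction n with
  | zero => exact contDiff_id
  | succ n ih => exact ih.comp hF.contDiff

lemma deriv_iterate_ne_zero (n : ℕ) (x : ℝ) : deriv F^[n] x ≠ 0 := by
  obtain ⟨C, hC, l, hl, hexp⟩ := hF.expandingLift.2.2
  rcases n.eq_zero_or_pos with rfl | hn
  · simp
  · exact abs_pos.1 ((by positivity : 0 < C * l ^ n).trans_le (hexp n hn x))

lemma strictMono : StrictMono F := by
  have hdiff : Differentiable ℝ F := hF.contDiff.differentiable one_ne_zero
  rcases hasDerivWithinAt_forall_lt_or_forall_gt_of_forall_ne convex_univ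
    (fun x _ => (hdiff x).hasDerivAt.hasDerivWithinAt)
    (fun x _ => hF.deriv_iterate_ne_zero 1 x) with hneg | hpos
  · have hanti : StrictAnti F := strictAnti_of_deriv_neg fun x => hneg x (mem_univ x)
    have hlt : F (0 + 1) < F 0 := hanti (by norm_num)
    rw [hF.map_add_one] at hlt
    exact absurd hlt (not_lt.2 (le_add_of_nonneg_right d.cast_nonneg))
  · exact strictMono_of_deriv_pos fun x => hpos x (mem_univ x)

lemma degree_pos : 0 < d := by
  have hlt : F 0 < F (0 + 1) := hF.strictMono (by norm_num)
  rw [hF.map_add_one] at hlt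
  exact_mod_cast (lt_add_iff_pos_right (F 0)).1 hlt

lemma surjective : Function.Surjective F := by
  intro y
  have hd : (0 : ℝ) < d := mod_cast hF.degree_pos
  have hfloor (m : ℤ) : F m = F 0 + m * d := by
    simpa using lift_add_intCast hF.map_add_one 0 m
  refine mem_range_of_exists_le_of_exists_ge hF.contDiff.continuous
    ⟨⌊(y - F 0) / d⌋, ?_⟩ ⟨⌈(y - F 0) / d⌉, ?_⟩
  · rw [hfloor, ← le_sub_iff_add_le', ← le_div_iff₀ hd]
    exact Int.floor_le _
  · rw [hfloor, ← sub_le_iff_le_add', ← div_le_iff₀ hd]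
    exact Int.le_ceil _

lemma apply_invBranch (a : ℕ) (x : ℝ) : F (invBranch F a x) = x + a :=
  Function.invFun_eq (hF.surjective _)

lemma invBranch_eq_iff {a : ℕ} {x y : ℝ} : invBranch F a x = y ↔ x + a = F y := by
  rw [← hF.strictMono.injective.eq_iff, hF.apply_invBranch]

lemma continuous_invBranch (a : ℕ) : Continuous (invBranch F a) := by
  let e := hF.strictMono.orderIsoOfSurjective F hF.surjective
  have he : invBranch F a = fun x => e.symm (x + a) := by
    funext x
    exact hF.invBranch_eq_iff.2 (e.apply_symm_apply _).symm
  rw [he]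
  exact e.symm.continuous.comp (continuous_add_const _)

lemma cmap_invBranch (a : ℕ) (x : ℝ) : cmap F (invBranch F a x : Circle1) = x := by
  rw [cmap_coe hF.map_add_one, hF.apply_invBranch, coe_add_natCast]

lemma exists_invBranch_eq {x : ℝ} {z : Circle1} (hz : cmap F z = x) :
    ∃ a : Fin d, (invBranch F a x : Circle1) = z := by
  obtain ⟨y, rfl⟩ := QuotientAddGroup.mk_surjective z
  obtain ⟨m, hm⟩ := exists_eq_add_intCast_of_coe_eq ((cmap_coe hF.map_add_one y).symm.trans hz)
  have hd : (0 : ℤ) < d := mod_cast hF.degree_pos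
  obtain ⟨a, ha⟩ := Int.eq_ofNat_of_zero_le (Int.emod_nonneg m hd.ne')
  refine ⟨⟨a, by exact_mod_cast ha ▸ Int.emod_lt_of_pos m hd⟩, ?_⟩
  have hbranch : invBranch F a x = y + (-(m / d) : ℤ) := by
    have hdiv : ((a : ℤ) : ℝ) + d * (m / d : ℤ) = m := mod_cast ha ▸ Int.emod_add_mul_ediv m d
    push_cast at hdiv
    rw [hF.invBranch_eq_iff, lift_add_intCast hF.map_add_one, hm, ← hdiv]
    push_cast
    ring
  change ((invBranch F a x : ℝ) : Circle1) = (y : Circle1)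
  rw [hbranch, coe_add_intCast]

lemma cmap_tauIter_succ (i : ℕ → Fin d) (n : ℕ) (x : ℝ) :
    cmap F (tauIter F i (n + 1) x : Circle1) = tauIter F i n x :=
  hF.cmap_invBranch _ _

lemma continuous_tauIter (n : ℕ) :
    Continuous fun p : (ℕ → Fin d) × ℝ => tauIter F p.1 n p.2 := by
  induction n with
  | zero => exact continuous_snd
  | succ n ih =>
    have hbranch : Continuous fun p : Fin d × ℝ => invBranch F p.1 p.2 :=
      continuous_prod_of_discrete_left.2 fun a => hF.continuous_invBranch a
    exact hbranch.comp (((continuous_apply n).comp continuous_fst).prodMk ih)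

lemma iterate_tauIter (i : ℕ → Fin d) (n : ℕ) (x : ℝ) :
    F^[n] (tauIter F i n x) = x + (∑ k ∈ Finset.range n, i k * d ^ k : ℕ) := by
  induction n with
  | zero => simp [tauIter]
  | succ n ih =>
    rw [Function.iterate_succ_apply, tauIter_succ, hF.apply_invBranch,
      iterate_lift_add_natCast hF.map_add_one, ih, Finset.sum_range_succ]
    push_cast
    ring

lemma hasDerivAt_tauIter (i : ℕ → Fin d) (n : ℕ) (x : ℝ) :
    HasDerivAt (tauIter F i n) (deriv F^[n] (tauIter F i n x))⁻¹ x := by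
  have hcont : Continuous (tauIter F i n) :=
    (hF.continuous_tauIter n).comp (Continuous.prodMk_right i)
  have hderiv := (((hF.contDiff_iterate n).differentiable one_ne_zero
    (tauIter F i n x)).hasDerivAt).sub_const ((∑ k ∈ Finset.range n, i k * d ^ k : ℕ) : ℝ)
  exact hderiv.of_local_left_inverse hcont.continuousAt (hF.deriv_iterate_ne_zero n _)
    (Eventually.of_forall fun y => by rw [hF.iterate_tauIter, add_sub_cancel_right])

lemma exists_summable_abs_inv_deriv_iterate_le :
    ∃ u : ℕ → ℝ, Summable u ∧ ∀ n x, |(deriv F^[n + 1] x)⁻¹| ≤ u n := by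
  obtain ⟨C, hC, l, hl, hexp⟩ := hF.expandingLift.2.2
  refine ⟨fun n => (C * l ^ (n + 1))⁻¹, ?_, fun n x => ?_⟩
  · have hgeom := summable_geometric_of_lt_one (by positivity) (inv_lt_one_of_one_lt₀ hl)
    simpa only [mul_inv, inv_pow] using ((summable_nat_add_iff 1).2 hgeom).mul_left C⁻¹
  · rw [abs_inv]
    exact inv_anti₀ (by positivity) (hexp (n + 1) n.succ_pos x)

lemma tendsto_tauIter_sub (i : ℕ → Fin d) (y z : ℝ) :
    Tendsto (fun n => tauIter F i n z - tauIter F i n y) atTop (𝓝 0) := by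
  obtain ⟨u, hu, hle⟩ := hF.exists_summable_abs_inv_deriv_iterate_le
  refine (tendsto_add_atTop_iff_nat 1).1 ?_
  refine squeeze_zero_norm (a := fun n => u n * ‖z - y‖) (fun n => ?_)
    (by simpa using hu.tendsto_atTop_zero.mul_const ‖z - y‖)
  exact convex_univ.norm_image_sub_le_of_norm_hasDerivWithin_le
    (fun x _ => (hF.hasDerivAt_tauIter i (n + 1) x).hasDerivWithinAt) (fun x _ => hle n _)
    (mem_univ y) (mem_univ z)

end OrientedExpandingLift

/-! ### The functions `h^f_i` -/

lemma exists_norm_deriv_comp_coe_le {f : Circle1 → ℝ} (hf : ContDiff ℝ 1 fun x : ℝ => f ↑x) :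
    ∃ M, ∀ x, ‖deriv (fun t : ℝ => f ↑t) x‖ ≤ M := by
  have hperiodic : Function.Periodic (deriv fun t : ℝ => f ↑t) 1 := fun x => by
    rw [← deriv_comp_add_const]
    simp only [AddCircle.coe_add_period]
  obtain ⟨M, hM⟩ := (hperiodic.isBounded_of_continuous one_ne_zero
    (hf.continuous_deriv le_rfl)).exists_norm_le
  exact ⟨M, fun x => hM _ (mem_range_self x)⟩

/-- The derivative at `x` of the term `f(τ_{i,n+1}(x))` of the series defining `h^f_i`. -/
noncomputable def hSumTermDeriv (F : ℝ → ℝ) {d : ℕ} (i : ℕ → Fin d) (f : Circle1 → ℝ) (n : ℕ)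
    (x : ℝ) : ℝ :=
  deriv (fun t : ℝ => f ↑t) (tauIter F i (n + 1) x) * (deriv F^[n + 1] (tauIter F i (n + 1) x))⁻¹

namespace OrientedExpandingLift

variable {F : ℝ → ℝ} {d : ℕ} (hF : OrientedExpandingLift F d) {f : Circle1 → ℝ}
  (hf : ContDiff ℝ 1 fun x : ℝ => f ↑x)
include hF hf

lemma hasDerivAt_hSum_term (i : ℕ → Fin d) (n : ℕ) (x : ℝ) :
    HasDerivAt (fun x : ℝ => f (tauIter F i (n + 1) x) - f (tauIter F i (n + 1) 0))
      (hSumTermDeriv F i f n x) x :=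
  (((hf.differentiable one_ne_zero) _).hasDerivAt.comp x
    (hF.hasDerivAt_tauIter i (n + 1) x)).sub_const _

lemma exists_summable_norm_hSumTermDeriv_le :
    ∃ u : ℕ → ℝ, Summable u ∧ ∀ n (i : ℕ → Fin d) x, ‖hSumTermDeriv F i f n x‖ ≤ u n := by
  obtain ⟨M, hM⟩ := exists_norm_deriv_comp_coe_le hf
  obtain ⟨u, hu, hle⟩ := hF.exists_summable_abs_inv_deriv_iterate_le
  refine ⟨fun n => M * u n, hu.mul_left M, fun n i x => ?_⟩
  rw [hSumTermDeriv, norm_mul]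
  exact mul_le_mul (hM _) (hle n _) (norm_nonneg _) ((norm_nonneg _).trans (hM 0))

lemma summable_hSum (i : ℕ → Fin d) (x : ℝ) :
    Summable fun n => f (tauIter F i (n + 1) x) - f (tauIter F i (n + 1) 0) := by
  obtain ⟨u, hu, hle⟩ := hF.exists_summable_norm_hSumTermDeriv_le hf
  exact summable_of_summable_hasDerivAt hu (hF.hasDerivAt_hSum_term hf i)
    (fun n => hle n i) (y₀ := 0) (by simp) x

lemma hasDerivAt_hSum (i : ℕ → Fin d) (x : ℝ) :
    HasDerivAt (hSum F i f) (∑' n, hSumTermDeriv F i f n x) x := by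
  obtain ⟨u, hu, hle⟩ := hF.exists_summable_norm_hSumTermDeriv_le hf
  exact hasDerivAt_tsum hu (hF.hasDerivAt_hSum_term hf i) (fun n => hle n i) (y₀ := 0)
    (by simp) x

lemma continuous_deriv_hSum :
    Continuous fun p : (ℕ → Fin d) × ℝ => deriv (hSum F p.1 f) p.2 := by
  obtain ⟨u, hu, hle⟩ := hF.exists_summable_norm_hSumTermDeriv_le hf
  simp only [(hF.hasDerivAt_hSum hf _ _).deriv]
  refine continuous_tsum (fun n => ?_) hu fun n p => hle n p.1 p.2
  have hτ := hF.continuous_tauIter (n + 1)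
  exact ((hf.continuous_deriv le_rfl).comp hτ).mul <|
    (((hF.contDiff_iterate (n + 1)).continuous_deriv le_rfl).comp hτ).inv₀
      fun p => hF.deriv_iterate_ne_zero _ _

lemma hasSum_hSum_sub (i : ℕ → Fin d) (y z : ℝ) :
    HasSum (fun n => f (tauIter F i (n + 1) z) - f (tauIter F i (n + 1) y))
      (hSum F i f z - hSum F i f y) := by
  have h := (hF.summable_hSum hf i z).hasSum.sub (hF.summable_hSum hf i y).hasSum
  simp only [sub_sub_sub_cancel_right] at h
  exact h

end OrientedExpandingLift

/-! ### Sub-actions and the words in `CL(x, K)` -/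

namespace OrientedExpandingLift

variable {F : ℝ → ℝ} {d : ℕ} (hF : OrientedExpandingLift F d) {f g : Circle1 → ℝ}
  {K : Set Circle1}
include hF

lemma isClosed_setOf_wordIn (hK : IsClosed K) :
    IsClosed {p : (ℕ → Fin d) × ℝ | WordIn F p.1 p.2 K} := by
  simp only [WordIn, ofPred_forall]
  exact isClosed_iInter fun n => isClosed_iInter fun _ =>
    hK.preimage ((AddCircle.continuous_mk' 1).comp (hF.continuous_tauIter n))

/-- Along a word of `CL(y, K)`, the sub-action inequality is an equality at the backward images of
`y`; subtracting it from the inequality at the backward images of `z`, the `β(f, T)` cancels and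
the `g`-terms telescope. -/
lemma sum_sub_le_of_wordIn (hg : IsSubaction f (cmap F) g) (hKE : K ⊆ Eset f (cmap F) g)
    {i : ℕ → Fin d} {y : ℝ} (hi : WordIn F i y K) (z : ℝ) (n : ℕ) :
    ∑ k ∈ Finset.range n, (f (tauIter F i (k + 1) z) - f (tauIter F i (k + 1) y)) ≤
      (g z - g y) - (g (tauIter F i n z) - g (tauIter F i n y)) := by
  induction n with
  | zero => simp [tauIter]
  | succ n ih =>
    have hz := hg.2 (tauIter F i (n + 1) z)
    have hy : g _ + f _ = g _ + beta f (cmap F) := hKE (hi (n + 1) n.succ_pos)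
    rw [hF.cmap_tauIter_succ] at hz hy
    rw [Finset.sum_range_succ]
    linarith

lemma tendsto_sub_tauIter (hg : Continuous g) (i : ℕ → Fin d) (y z : ℝ) :
    Tendsto (fun n => g (tauIter F i n z) - g (tauIter F i n y)) atTop (𝓝 0) := by
  have hunif : UniformContinuous fun x : ℝ => g ↑x :=
    (CompactSpace.uniformContinuous_of_continuous hg).comp <|
      uniformContinuous_addMonoidHom_of_continuous
        (f := QuotientAddGroup.mk' (AddSubgroup.zmultiples (1 : ℝ))) (AddCircle.continuous_mk' 1)
  have hdist : Tendsto (fun n => (tauIter F i n z, tauIter F i n y)) atTop (uniformity ℝ) :=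
    tendsto_uniformity_iff_dist_tendsto_zero.2 <|
      tendsto_zero_iff_norm_tendsto_zero.1 (hF.tendsto_tauIter_sub i y z)
  exact tendsto_zero_iff_norm_tendsto_zero.2 <|
    tendsto_uniformity_iff_dist_tendsto_zero.1 (Tendsto.comp hunif hdist)

lemma supportsBelow_hSum (hf : ContDiff ℝ 1 fun x : ℝ => f ↑x) (hg : IsSubaction f (cmap F) g)
    (hKE : K ⊆ Eset f (cmap F) g) :
    SupportsBelow (fun i : ℕ → Fin d => hSum F i f) (fun x => g ↑x)
      {p | WordIn F p.1 p.2 K} := by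
  intro i y hi z
  have hlim := (hF.tendsto_sub_tauIter hg.1 i y z).const_sub (g z - g y)
  rw [sub_zero] at hlim
  exact le_of_tendsto_of_tendsto' (hF.hasSum_hSum_sub hf i y z).tendsto_sum_nat hlim
    (hF.sum_sub_le_of_wordIn hg hKE hi z)

lemma exists_eventually_forall_wordIn_zero_eq (hf : ContDiff ℝ 1 fun x : ℝ => f ↑x)
    (hg : IsSubaction f (cmap F) g) (hKE : K ⊆ Eset f (cmap F) g) (hK : IsClosed K) {x : ℝ}
    (hx : (x : Circle1) ∈ K) (hnosc : ¬ IsSupercriticalValue F d f K x) :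
    (∃ a, ∀ᶠ y in 𝓝[<] x, ∀ i : ℕ → Fin d, WordIn F i y K → i 0 = a) ∧
      ∃ a, ∀ᶠ y in 𝓝[>] x, ∀ i : ℕ → Fin d, WordIn F i y K → i 0 = a := by
  have : Nonempty (Fin d) := Fin.pos_iff_nonempty.1 hF.degree_pos
  have hsupp := hF.supportsBelow_hSum hf hg hKE
  have hd (i : ℕ → Fin d) : Differentiable ℝ (hSum F i f) := fun y =>
    (hF.hasDerivAt_hSum hf i y).differentiableAt
  have hc := hF.continuous_deriv_hSum hf
  have hclosed := hF.isClosed_setOf_wordIn hK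
  have hletter : IsLocallyConstant fun i : ℕ → Fin d => i 0 :=
    (IsLocallyConstant.iff_continuous _).2 (continuous_apply 0)
  have hsep (i j : ℕ → Fin d) (hi : WordIn F i x K) (hj : WordIn F j x K)
      (hij : deriv (hSum F i f) x = deriv (hSum F j f) x) : i 0 = j 0 :=
    not_not.1 fun hne => hnosc ⟨hx, i, j, hi, hj, hne, hij⟩
  exact ⟨hsupp.exists_eventually_nhdsLT_eq hd hc hclosed hletter hsep,
    hsupp.exists_eventually_nhdsGT_eq hd hc hclosed hletter hsep⟩

lemma exists_invBranch_mem (hKT : SurjOn (cmap F) K K) {x : ℝ} (hx : (x : Circle1) ∈ K) :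
    ∃ a : Fin d, (invBranch F a x : Circle1) ∈ K := by
  obtain ⟨z, hzK, hz⟩ := hKT hx
  obtain ⟨a, rfl⟩ := hF.exists_invBranch_eq hz
  exact ⟨a, hzK⟩

lemma exists_wordIn (hKT : SurjOn (cmap F) K K) {x : ℝ} (hx : (x : Circle1) ∈ K) :
    ∃ i : ℕ → Fin d, WordIn F i x K := by
  choose a ha using fun y : {y : ℝ // (y : Circle1) ∈ K} => hF.exists_invBranch_mem hKT y.2
  let orbit (n : ℕ) : {y : ℝ // (y : Circle1) ∈ K} :=
    (fun y => ⟨invBranch F (a y) y, ha y⟩)^[n] ⟨x, hx⟩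
  have horbit (n : ℕ) : tauIter F (fun n => a (orbit n)) n x = orbit n := by
    induction n with
    | zero => rfl
    | succ n ih =>
      rw [tauIter_succ, ih]
      simp only [orbit, Function.iterate_succ_apply']
  exact ⟨fun n => a (orbit n), fun n _ => by rw [horbit]; exact (orbit n).2⟩

lemma exists_wordIn_zero_eq (hKT : SurjOn (cmap F) K K) {x : ℝ} {a : Fin d}
    (ha : (invBranch F a x : Circle1) ∈ K) : ∃ i : ℕ → Fin d, WordIn F i x K ∧ i 0 = a := by
  obtain ⟨i, hi⟩ := hF.exists_wordIn hKT ha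
  refine ⟨fun n => n.casesOn a i, fun n hn => ?_, rfl⟩
  obtain ⟨n, rfl⟩ := Nat.exists_eq_add_one.2 hn
  rw [tauIter_succ']
  rcases n.eq_zero_or_pos with rfl | hn
  · exact ha
  · exact hi n hn

lemma preimage_inter_eq_singleton (hKT : SurjOn (cmap F) K K) {x : ℝ} (hx : (x : Circle1) ∈ K)
    {a : Fin d} (ha : ∀ i, WordIn F i x K → i 0 = a) :
    cmap F ⁻¹' {(x : Circle1)} ∩ K = {(invBranch F a x : Circle1)} := by
  refine eq_singleton_iff_nonempty_unique_mem.2 ⟨?_, ?_⟩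
  · obtain ⟨z, hzK, hz⟩ := hKT hx
    exact ⟨z, hz, hzK⟩
  · rintro z ⟨hz, hzK⟩
    obtain ⟨b, rfl⟩ := hF.exists_invBranch_eq hz
    obtain ⟨i, hi, rfl⟩ := hF.exists_wordIn_zero_eq hKT hzK
    rw [ha i hi]

end OrientedExpandingLift

/-! ### Regular critical values -/

section Regular

variable {T : Circle1 → Circle1} {K : Set Circle1} {x : ℝ}

lemma isRegularCriticalValue_of_continuousOn {s : ℝ → Circle1} (hs : ContinuousOn s {x}ᶜ)
    (hT : ∀ y, T (s y) = y)
    (hK : ∀ᶠ y : ℝ in 𝓝[≠] x, (y : Circle1) ∈ K → T ⁻¹' {(y : Circle1)} ∩ K = {s y}) :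
    IsRegularCriticalValue T K x := by
  obtain ⟨ε, hε, hball⟩ := Metric.mem_nhdsWithin_iff.1 hK
  let δ := min ε (1 / 2)
  have hδ : 0 < δ := lt_min hε (by norm_num)
  let e := AddCircle.openPartialHomeomorphCoe (1 : ℝ) (x - 1 / 2)
  have hsource : Metric.ball x δ ⊆ e.source := by
    refine (Metric.ball_subset_ball (min_le_right _ _)).trans ?_
    rw [Real.ball_eq_Ioo]
    exact Ioo_subset_Ioo le_rfl (by linarith)
  let U : Set Circle1 := e '' Metric.ball x δ
  have hUx {z : Circle1} (hz : z ∈ U \ {(x : Circle1)}) :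
      e.symm z ∈ Metric.ball x δ ∧ e.symm z ≠ x ∧ (e.symm z : Circle1) = z := by
    obtain ⟨⟨y, hy, rfl⟩, hyx⟩ := hz
    rw [e.left_inv (hsource hy)]
    exact ⟨hy, fun h => hyx (congrArg _ h), rfl⟩
  refine ⟨U, ?_, ?_, fun b _ => ⟨s ∘ e.symm, ?_, fun z hz => ?_, fun z ⟨hzK, hz⟩ => ?_⟩⟩
  · exact (QuotientAddGroup.isOpenMap_coe _ Metric.isOpen_ball).mem_nhds
      (mem_image_of_mem _ (Metric.mem_ball_self hδ))
  · exact (Metric.isConnected_ball hδ).image _ (AddCircle.continuous_mk' 1).continuousOn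
  · have he : ContinuousOn e.symm (U \ {(x : Circle1)}) :=
      e.continuousOn_symm.mono (sdiff_subset.trans (e.mapsTo.mono_left hsource).image_subset)
    exact (hs.comp he fun z hz => (hUx hz).2.1).mono (connectedComponentIn_subset _ _)
  · exact (hT _).trans (hUx (connectedComponentIn_subset _ _ hz)).2.2
  · obtain ⟨hzδ, hzx, hz_coe⟩ := hUx (connectedComponentIn_subset _ _ hz)
    have h := hball ⟨Metric.ball_subset_ball (min_le_left _ _) hzδ, hzx⟩
    rw [mem_ofPred_eq, hz_coe] at h
    exact h hzK

lemma isRegularCriticalValue_of_continuous {left right : ℝ → Circle1}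
    (hleft : Continuous left) (hright : Continuous right)
    (hT_left : ∀ y, T (left y) = y) (hT_right : ∀ y, T (right y) = y)
    (hK_left : ∀ᶠ y : ℝ in 𝓝[<] x, (y : Circle1) ∈ K → T ⁻¹' {(y : Circle1)} ∩ K = {left y})
    (hK_right : ∀ᶠ y : ℝ in 𝓝[>] x, (y : Circle1) ∈ K → T ⁻¹' {(y : Circle1)} ∩ K = {right y}) :
    IsRegularCriticalValue T K x := by
  classical
  have hs_left {y : ℝ} (hy : y < x) : (Iio x).piecewise left right y = left y :=
    piecewise_eq_of_mem _ _ _ (mem_Iio.2 hy)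
  have hs_right {y : ℝ} (hy : x ≤ y) : (Iio x).piecewise left right y = right y :=
    piecewise_eq_of_notMem _ _ _ (notMem_Iio.2 hy)
  refine isRegularCriticalValue_of_continuousOn (s := (Iio x).piecewise left right)
    (ContinuousOn.piecewise ?_ hleft.continuousOn hright.continuousOn) (fun y => ?_) ?_
  · rw [frontier_Iio]
    exact fun y ⟨hyx, hy⟩ => absurd hy hyx
  · rcases lt_or_ge y x with hy | hy
    · rw [hs_left hy, hT_left]
    · rw [hs_right hy, hT_right]
  · rw [← Iio_union_Ioi, nhdsWithin_union, eventually_sup]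
    refine ⟨?_, ?_⟩
    · filter_upwards [hK_left, self_mem_nhdsWithin] with y hy hyx
      rwa [hs_left hyx]
    · filter_upwards [hK_right, self_mem_nhdsWithin] with y hy hyx
      rwa [hs_right (mem_Ioi.1 hyx).le]

end Regular

theorem no_supercritical_implies_sturmianLike_general {F : ℝ → ℝ} {d : ℕ}
    (hF : OrientedExpandingLift F d) {K : Set Circle1} (hK : IsClosed K)
    (hKT : SurjOn (cmap F) K K) {f : Circle1 → ℝ} (hf : ContDiff ℝ 1 fun x : ℝ => f ↑x)
    (hnosc : ¬ ∃ x : ℝ, IsSupercriticalValue F d f K x) {g : Circle1 → ℝ}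
    (hg : IsSubaction f (cmap F) g) (hKE : K ⊆ Eset f (cmap F) g) :
    SturmianLike (cmap F) K := by
  rintro x₀ ⟨hx, -⟩
  obtain ⟨x, rfl⟩ := QuotientAddGroup.mk_surjective x₀
  obtain ⟨⟨a, ha⟩, b, hb⟩ := hF.exists_eventually_forall_wordIn_zero_eq hf hg hKE hK hx
    fun hsc => hnosc ⟨x, hsc⟩
  have hcont (c : Fin d) : Continuous fun y => (invBranch F c y : Circle1) :=
    (AddCircle.continuous_mk' 1).comp (hF.continuous_invBranch c)
  exact isRegularCriticalValue_of_continuous (hcont a) (hcont b)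
    (hF.cmap_invBranch a) (hF.cmap_invBranch b)
    (ha.mono fun y hy hyK => hF.preimage_inter_eq_singleton hKT hyK hy)
    (hb.mono fun y hy hyK => hF.preimage_inter_eq_singleton hKT hyK hy)

/-- Proposition 3.4: if a nonempty compact `T`-invariant set `K` has no `f`-supercritical
value and is contained in `E_{f,T,g}` for some continuous sub-action `g`, then `T|K` is
Sturmian-like. -/
theorem no_supercritical_implies_sturmianLike (F : ℝ → ℝ) (d : ℕ)
    (hF : AnalyticExpandingLift F d)
    (K : Set Circle1) (hKne : K.Nonempty) (hKc : IsCompact K) (hKinv : cmap F '' K = K)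
    (f : Circle1 → ℝ) (hf : ContDiff ℝ 1 fun x : ℝ => f ↑x)
    (hnosc : ¬ ∃ x : ℝ, IsSupercriticalValue F d f K x)
    (g : Circle1 → ℝ) (hg : IsSubaction f (cmap F) g) (hKE : K ⊆ Eset f (cmap F) g) :
    SturmianLike (cmap F) K :=
  no_supercritical_implies_sturmianLike_general hF.orientedExpandingLift hKc.isClosed hKinv.ge
    hf hnosc hg hKE
end
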